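/- arXiv:math/9902154 — 2 statements merged into one kernel-verified Lean document; each statement's English description precedes it below -/
import Mathlib

section
/- Let K ⊂ ℂ be compact, connected, full, and locally connected, and let K₀ be the closure of a connected component of the interior of K. Then for any z in the interior of K₀ and any z' ∈ K ∖ K₀, there is a unique point w ∈ ∂K₀ such that every path in K from z' to z passes through w; moreover removing w disconnects K, with z and z' lying in different connected components of K ∖ {w}. -/
open Set Metric Filter Topology

/-- A set is full if its complement has no bounded connected components. -/
def IsFull (K : Set ℂ) : Prop :=
  ∀ w ∉ K, ¬ Bornology.IsBounded (connectedComponentIn Kᶜ w)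

/-- `γ` is a path in `K` from `a` to `b`, parametrized over `[0,1]`. -/
def IsPathIn (K : Set ℂ) (γ : ℝ → ℂ) (a b : ℂ) : Prop :=
  ContinuousOn γ (Set.Icc 0 1) ∧ γ 0 = a ∧ γ 1 = b ∧ γ '' Set.Icc 0 1 ⊆ K

theorem sub_eq_sub_of_exp_eqOn {α : Type*} [TopologicalSpace α] {L : Set α}
    (hL : IsPreconnected L) {φ ψ : α → ℂ} (hφ : ContinuousOn φ L) (hψ : ContinuousOn ψ L)
    (h : ∀ z ∈ L, Complex.exp (φ z) = Complex.exp (ψ z)) {x y : α} (hx : x ∈ L) (hy : y ∈ L) :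
    φ x - ψ x = φ y - ψ y := by
  have hne : (2 * Real.pi * Complex.I : ℂ) ≠ 0 := Complex.two_pi_I_ne_zero
  have hT : IsDiscrete (range ((↑) : ℤ → ℂ)) :=
    Complex.isClosedEmbedding_intCast.isInducing.isDiscrete_range
  have key := hL.constant_of_mapsTo hT
    (f := fun z ↦ (φ z - ψ z) / (2 * Real.pi * Complex.I)) (by fun_prop)
    (fun z hz ↦ by
      obtain ⟨n, hn⟩ := Complex.exp_eq_exp_iff_exists_int.1 (h z hz)
      refine ⟨n, ?_⟩
      simp only [hn]
      field_simp
      ring) hx hy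
  exact (div_left_inj' hne).1 key

theorem not_exists_log_of_eqOn_compl_bounded {F : ℂ → ℂ} (hF : Continuous F) (h0 : ∀ z, F z ≠ 0)
    {D : Set ℂ} (hD : Bornology.IsBounded D) (p : ℂ) (hFD : ∀ z ∉ D, F z = z - p) : False := by
  obtain ⟨φ, hφ, hexp⟩ := Complex.exists_continuousOn_eqOn_exp_comp (U := (univ : Set ℂ))
    (by
      have := (convex_univ (𝕜 := ℝ) (E := ℂ)).contractibleSpace univ_nonempty
      exact SimplyConnectedSpace.ofContractible _) isOpen_univ hF.continuousOn
    (by rintro ⟨z, -, hz⟩; exact h0 z hz)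
  obtain ⟨R, hR0, hR⟩ := hD.subset_ball_lt 0 p
  have hc : ∀ θ : ℝ, Complex.exp (φ (circleMap p R θ)) =
      Complex.exp (Real.log R + θ * Complex.I) := by
    intro θ
    have := hexp (mem_univ (circleMap p R θ))
    rw [Function.comp_apply, hFD] at this
    · rw [this, Complex.exp_add, ← Complex.ofReal_exp, Real.exp_log hR0]
      simp [circleMap]
    · intro h
      have := hR h
      simp [circleMap, abs_of_pos hR0] at this
  have hφ' := continuousOn_univ.1 hφ
  have key := sub_eq_sub_of_exp_eqOn (isPreconnected_univ (α := ℝ))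
    (φ := fun θ ↦ φ (circleMap p R θ))
    (ψ := fun θ ↦ Real.log R + θ * Complex.I) (by fun_prop) (by fun_prop) (fun θ _ ↦ hc θ)
    (mem_univ 0) (mem_univ (2 * Real.pi))
  have h2 : circleMap p R (2 * Real.pi) = circleMap p R 0 := by simp [circleMap]
  rw [h2] at key
  have : (2 * Real.pi * Complex.I : ℂ) ≠ 0 := Complex.two_pi_I_ne_zero
  apply this
  push_cast at key
  linear_combination key

/-- A bounded open set separating `p` from `q` has no branch of `log ((z - p) / (z - q))` on its
frontier. -/
theorem not_exists_log_on_frontier {D A : Set ℂ} (hb : Bornology.IsBounded D)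
    (hfA : frontier D ⊆ A) {p q : ℂ} (hp : p ∈ D) (hq : q ∉ closure D) {φ : ℂ → ℂ}
    (hφ : ContinuousOn φ A) (hexp : ∀ z ∈ A, Complex.exp (φ z) = (z - p) / (z - q)) : False := by
  classical
  obtain ⟨g, hg⟩ := ContinuousMap.exists_restrict_eq (isClosed_frontier (s := D))
    ⟨_, continuousOn_iff_continuous_domRestrict.1 (hφ.mono hfA)⟩
  have hg' : ∀ z ∈ frontier D, g z = φ z := fun z hz ↦ congrArg (fun f ↦ f ⟨z, hz⟩) hg
  have hqne : ∀ z ∈ closure D, z - q ≠ 0 := fun z hz h ↦ hq (sub_eq_zero.1 h ▸ hz)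
  refine not_exists_log_of_eqOn_compl_bounded
    (F := fun z ↦ if z ∈ D then Complex.exp (g z) * (z - q) else z - p) ?_ ?_ hb p ?_
  · refine Continuous.if ?_ (by fun_prop) (by fun_prop)
    intro z hz
    have hz' : z ∈ frontier D := hz
    rw [hg' z hz', hexp z (hfA hz'), div_mul_cancel₀ _ (hqne z hz'.1)]
  · intro z
    split_ifs with h
    · exact mul_ne_zero (Complex.exp_ne_zero _) (hqne z (subset_closure h))
    · exact fun h' ↦ h (sub_eq_zero.1 h' ▸ hp)
  · intro z hz
    simp [hz]

theorem exists_log_of_isPreconnected {X D : Set ℂ} (hX : IsClosed X) (hD : IsPreconnected D)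
    (hDX : Disjoint D X) {p q : ℂ} (hp : p ∈ D) (hq : q ∈ D) :
    ∃ φ : ℂ → ℂ, ContinuousOn φ X ∧ ∀ z ∈ X, Complex.exp (φ z) = (z - p) / (z - q) := by
  have hne : ∀ p ∈ D, ∀ z ∈ X, z - p ≠ 0 := fun p hp z hz h ↦
    hDX.le_bot ⟨hp, sub_eq_zero.1 h ▸ hz⟩
  refine hD.induction₂ (fun p q ↦ ∃ φ : ℂ → ℂ, ContinuousOn φ X ∧
    ∀ z ∈ X, Complex.exp (φ z) = (z - p) / (z - q)) ?_ ?_ ?_ hp hq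
  · intro p hp
    have hpX : p ∈ Xᶜ := fun h ↦ hDX.le_bot ⟨hp, h⟩
    obtain ⟨r, hr, hball⟩ := Metric.isOpen_iff.1 hX.isOpen_compl p hpX
    filter_upwards [self_mem_nhdsWithin, mem_nhdsWithin_of_mem_nhds (ball_mem_nhds p hr)]
      with q hqD hq
    have hs : ∀ z ∈ X, (z - q) / (z - p) ∈ Complex.slitPlane := by
      intro z hz
      have h1 := hne p hp z hz
      have : (z - q) / (z - p) = 1 + (p - q) / (z - p) := by field_simp; ring
      rw [this]
      apply Complex.mem_slitPlane_of_norm_lt_one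
      rw [norm_div, div_lt_one (norm_pos_iff.2 h1), ← dist_eq_norm, ← dist_eq_norm]
      refine lt_of_lt_of_le (by rwa [dist_comm]) (not_lt.1 fun h ↦ hball (mem_ball.2 h) hz)
    refine ⟨fun z ↦ -Complex.log ((z - q) / (z - p)), ?_, ?_⟩
    · refine (ContinuousOn.clog ?_ hs).neg
      exact ContinuousOn.div (by fun_prop) (by fun_prop) (hne p hp)
    · intro z hz
      rw [Complex.exp_neg, Complex.exp_log (Complex.slitPlane_ne_zero (hs z hz)), inv_div]
  · rintro x y z - hy - ⟨φ, hφ, h1⟩ ⟨ψ, hψ, h2⟩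
    refine ⟨fun w ↦ φ w + ψ w, hφ.add hψ, fun w hw ↦ ?_⟩
    rw [Complex.exp_add, h1 w hw, h2 w hw, div_mul_div_cancel₀ (hne y hy w hw)]
  · rintro x y - - ⟨φ, hφ, h1⟩
    exact ⟨fun w ↦ -φ w, hφ.neg, fun w hw ↦ by rw [Complex.exp_neg, h1 w hw, inv_div]⟩

/-- Two branches on closed sets that agree on the overlap glue. -/
theorem ContinuousOn.exists_glue {α β : Type*} [TopologicalSpace α] [TopologicalSpace β]
    {A B : Set α} (hA : IsClosed A) (hB : IsClosed B)
    {φ ψ : α → β} (hφ : ContinuousOn φ A) (hψ : ContinuousOn ψ B)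
    (h : ∀ z ∈ A, z ∈ B → φ z = ψ z) :
    ∃ χ : α → β, ContinuousOn χ (A ∪ B) ∧ EqOn χ φ A ∧ EqOn χ ψ B := by
  classical
  have h1 : EqOn (A.piecewise φ ψ) φ A := A.piecewise_eqOn φ ψ
  have h2 : EqOn (A.piecewise φ ψ) ψ B := by
    intro z hz
    by_cases hzA : z ∈ A
    · rw [h1 hzA, h z hzA hz]
    · exact piecewise_eq_of_notMem _ _ _ hzA
  exact ⟨A.piecewise φ ψ, (hφ.congr h1).union_of_isClosed (hψ.congr h2) hA hB, h1, h2⟩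

theorem div_mem_slitPlane_of_notMem_segment {p q z : ℂ} (h : z ∉ segment ℝ p q) :
    (z - p) / (z - q) ∈ Complex.slitPlane := by
  by_contra hw
  apply h
  have hzq : z - q ≠ 0 := fun h' ↦ h (by rw [sub_eq_zero.1 h']; exact right_mem_segment ℝ p q)
  rw [Complex.mem_slitPlane_iff, not_or, not_lt, not_not] at hw
  set t : ℝ := -((z - p) / (z - q)).re with ht
  have ht0 : 0 ≤ t := by linarith [hw.1]
  have hwt : (z - p) / (z - q) = -(t : ℂ) := by
    apply Complex.ext <;> simp [ht, hw.2]
  rw [div_eq_iff hzq] at hwt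
  have h1 : (1 + t : ℝ) ≠ 0 := by positivity
  have h1' : (1 + t : ℂ) ≠ 0 := by exact_mod_cast h1
  refine ⟨1 / (1 + t), t / (1 + t), by positivity, by positivity, by field_simp, ?_⟩
  simp only [Complex.real_smul]
  push_cast
  field_simp
  linear_combination -hwt

/-- Along a segment crossing `[p, q]` perpendicularly in the middle, the argument of
`(z - p) / (z - q)` increases past `π`: the continuous branch which is principal at the first
endpoint exceeds the principal branch by `2πi` at the second one. -/
theorem exists_log_on_segment {s₁ s₂ p q : ℂ} (hs : s₁ ≠ s₂) {δ : ℝ} (hδ : 0 < δ)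
    (hp : p = (s₁ + s₂) / 2 + δ * Complex.I * ((s₂ - s₁) / 2))
    (hq : q = (s₁ + s₂) / 2 - δ * Complex.I * ((s₂ - s₁) / 2)) :
    ∃ h : ℂ → ℂ, ContinuousOn h (segment ℝ s₁ s₂) ∧
      (∀ z ∈ segment ℝ s₁ s₂, Complex.exp (h z) = (z - p) / (z - q)) ∧
      h s₁ = Complex.log ((s₁ - p) / (s₁ - q)) ∧
      h s₂ = Complex.log ((s₂ - p) / (s₂ - q)) + 2 * Real.pi * Complex.I := by
  set m := (s₁ + s₂) / 2 with hm
  set v := (s₂ - s₁) / 2 with hv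
  have hv0 : v ≠ 0 := div_ne_zero (sub_ne_zero.2 hs.symm) two_ne_zero
  have hs1 : (s₁ - m) / v = -1 := by rw [div_eq_iff hv0]; ring
  have hs2 : (s₂ - m) / v = 1 := by rw [div_eq_iff hv0]; ring
  have hS : ∀ z ∈ segment ℝ s₁ s₂, ∃ u : ℝ, (z - m) / v = u := by
    rintro z ⟨a, b, -, -, hab, rfl⟩
    refine ⟨b - a, ?_⟩
    rw [div_eq_iff hv0]
    simp only [Complex.real_smul, hm, hv]
    push_cast
    have : (a + b : ℂ) = 1 := by exact_mod_cast hab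
    linear_combination ((s₁ + s₂) / 2) * this
  set h : ℂ → ℂ := fun z ↦ Real.pi * Complex.I + Complex.log (δ + Complex.I * ((z - m) / v)) -
    Complex.log (δ - Complex.I * ((z - m) / v)) with hh
  have hsl : ∀ u : ℝ, (δ + Complex.I * u : ℂ) ∈ Complex.slitPlane := fun u ↦ Or.inl (by simpa)
  have hsl' : ∀ u : ℝ, (δ - Complex.I * u : ℂ) ∈ Complex.slitPlane := fun u ↦ Or.inl (by simpa)
  have hexp : ∀ z ∈ segment ℝ s₁ s₂, Complex.exp (h z) = (z - p) / (z - q) := by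
    intro z hz
    obtain ⟨u, hu⟩ := hS z hz
    have hz' : z = m + u * v := by rw [← hu]; field_simp; ring
    have h1 := Complex.slitPlane_ne_zero (hsl u)
    have h2 := Complex.slitPlane_ne_zero (hsl' u)
    have e1 : z - p = -Complex.I * v * (δ + Complex.I * u) * 1 := by
      rw [hz', hp]; linear_combination (u * v) * Complex.I_sq
    have e2 : z - q = Complex.I * v * (δ - Complex.I * u) := by
      rw [hz', hq]; linear_combination (u * v) * Complex.I_sq
    simp only [hh, hu]
    rw [Complex.exp_sub, Complex.exp_add, Complex.exp_pi_mul_I, Complex.exp_log h1,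
      Complex.exp_log h2, e1, e2]
    have := Complex.I_ne_zero
    field_simp
  set θ := (δ + Complex.I : ℂ).arg with hθ
  have hθ0 : 0 < θ := by
    refine lt_of_le_of_ne (Complex.arg_nonneg_iff.2 (by simp)) fun h0 ↦ ?_
    have := (Complex.arg_eq_zero_iff.1 h0.symm).2
    simp at this
  have hθ2 : θ < Real.pi / 2 := Complex.arg_lt_pi_div_two_iff.2 (Or.inl (by simpa))
  have hθ' : (δ - Complex.I : ℂ).arg = -θ := by
    have : (δ - Complex.I : ℂ) = (starRingEnd ℂ) (δ + Complex.I) := by simp [sub_eq_add_neg]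
    rw [this, Complex.arg_conj, if_neg (by linarith [Real.pi_pos])]
  have him1 : (h s₁).im = Real.pi - 2 * θ := by
    simp [hh, hs1, Complex.log_im, hθ', ← sub_eq_add_neg, ← hθ]; ring
  have him2 : (h s₂).im = Real.pi + 2 * θ := by
    simp [hh, hs2, Complex.log_im, hθ', ← hθ]; ring
  refine ⟨h, ?_, hexp, ?_, ?_⟩
  · refine ContinuousOn.sub (continuousOn_const.add (ContinuousOn.clog (by fun_prop) ?_))
      (ContinuousOn.clog (by fun_prop) ?_)
    · intro z hz
      obtain ⟨u, hu⟩ := hS z hz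
      rw [hu]; exact hsl u
    · intro z hz
      obtain ⟨u, hu⟩ := hS z hz
      rw [hu]; exact hsl' u
  · rw [← hexp _ (left_mem_segment ℝ s₁ s₂), Complex.log_exp] <;> linarith
  · have : Complex.exp (h s₂ - 2 * Real.pi * Complex.I) = (s₂ - p) / (s₂ - q) := by
      rw [Complex.exp_sub, Complex.exp_two_pi_mul_I, div_one,
        hexp _ (right_mem_segment ℝ s₁ s₂)]
    rw [← this, Complex.log_exp] <;> simp [him2] <;> linarith

theorem isClosed_segment (a b : ℂ) : IsClosed (segment ℝ a b) := by
  rw [segment_eq_image]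
  exact (isCompact_Icc.image (by fun_prop)).isClosed

/-- A connected closed set joining the endpoints of a segment, and avoiding a transversal
`[p, q]` to this segment, forms with the segment a closed set separating `p` from `q`. -/
theorem not_isPreconnected_of_crossing {s₁ s₂ p q : ℂ} (hs : s₁ ≠ s₂) {δ : ℝ} (hδ : 0 < δ)
    (hp : p = (s₁ + s₂) / 2 + δ * Complex.I * ((s₂ - s₁) / 2))
    (hq : q = (s₁ + s₂) / 2 - δ * Complex.I * ((s₂ - s₁) / 2))
    {L : Set ℂ} (hL : IsPreconnected L) (hLc : IsClosed L) (h1 : s₁ ∈ L) (h2 : s₂ ∈ L)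
    (hLpq : Disjoint L (segment ℝ p q)) {T : Set ℂ} (hT : IsPreconnected T)
    (hTX : Disjoint T (segment ℝ s₁ s₂ ∪ L)) (hpT : p ∈ T) (hqT : q ∈ T) : False := by
  obtain ⟨h, hc, hexp, e1, e2⟩ := exists_log_on_segment hs hδ hp hq
  obtain ⟨φ, hφ, hφexp⟩ := exists_log_of_isPreconnected
    ((isClosed_segment s₁ s₂).union hLc) hT hTX hpT hqT
  have hsl : ∀ z ∈ L, (z - p) / (z - q) ∈ Complex.slitPlane := fun z hz ↦
    div_mem_slitPlane_of_notMem_segment fun h ↦ hLpq.le_bot ⟨hz, h⟩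
  have hqL : ∀ z ∈ L, z - q ≠ 0 := fun z hz h ↦
    hLpq.le_bot ⟨hz, by rw [sub_eq_zero.1 h]; exact right_mem_segment ℝ p q⟩
  have k1 := sub_eq_sub_of_exp_eqOn hL (hφ.mono subset_union_right)
    (ψ := fun z ↦ Complex.log ((z - p) / (z - q)))
    (ContinuousOn.clog (ContinuousOn.div (by fun_prop) (by fun_prop) hqL) hsl)
    (fun z hz ↦ by
      rw [hφexp z (Or.inr hz), Complex.exp_log (Complex.slitPlane_ne_zero (hsl z hz))]) h1 h2
  have k2 := sub_eq_sub_of_exp_eqOn (convex_segment s₁ s₂).isPreconnected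
    (hφ.mono subset_union_left) hc (fun z hz ↦ by rw [hφexp z (Or.inl hz), hexp z hz])
    (left_mem_segment ℝ s₁ s₂) (right_mem_segment ℝ s₁ s₂)
  rw [e1, e2] at k2
  apply Complex.two_pi_I_ne_zero
  linear_combination k2 - k1

theorem frontier_connectedComponentIn_compl_subset {X : Set ℂ} (hX : IsClosed X) (p : ℂ) :
    frontier (connectedComponentIn Xᶜ p) ⊆ X := by
  intro z hz
  by_contra hzX
  have hD : IsOpen (connectedComponentIn Xᶜ p) := hX.isOpen_compl.connectedComponentIn
  have hpre : IsPreconnected (connectedComponentIn Xᶜ p ∪ {z}) :=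
    isPreconnected_connectedComponentIn.subset_closure subset_union_left
      (union_subset subset_closure (singleton_subset_iff.2 hz.1))
  rw [hD.frontier_eq] at hz
  have hpX : p ∈ Xᶜ := by
    by_contra h
    rw [connectedComponentIn_eq_empty h] at hz
    simp at hz
  exact hz.2 (hpre.subset_connectedComponentIn (Or.inl (mem_connectedComponentIn hpX))
    (union_subset (connectedComponentIn_subset _ _) (singleton_subset_iff.2 hzX))
    (Or.inr rfl))

theorem isPreconnected_compl_closedBall (R : ℝ) : IsPreconnected (closedBall (0 : ℂ) R)ᶜ := by
  rcases lt_or_ge R 0 with hR | hR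
  · rw [closedBall_eq_empty.2 hR, compl_empty]
    exact isPreconnected_univ
  have : (closedBall (0 : ℂ) R)ᶜ =
      (fun x : ℝ × ℝ ↦ (x.1 : ℂ) * Complex.exp (x.2 * Complex.I)) '' (Ioi R ×ˢ univ) := by
    ext z
    simp only [mem_compl_iff, mem_closedBall, dist_zero_right, not_le, mem_image, mem_prod,
      mem_Ioi, mem_univ, and_true, Prod.exists]
    constructor
    · exact fun h ↦ ⟨‖z‖, z.arg, h, Complex.norm_mul_exp_arg_mul_I z⟩
    · rintro ⟨a, b, ha, rfl⟩
      rw [norm_mul, Complex.norm_exp_ofReal_mul_I, mul_one, Complex.norm_real]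
      exact ha.trans_le (Real.le_norm_self a)
  rw [this]
  exact (isPreconnected_Ioi.prod isPreconnected_univ).image _ (by fun_prop)

theorem isBounded_connectedComponentIn_or {X : Set ℂ} (hX : Bornology.IsBounded X) {p q : ℂ}
    (hq : q ∈ Xᶜ) (hpq : q ∉ connectedComponentIn Xᶜ p) :
    Bornology.IsBounded (connectedComponentIn Xᶜ p) ∨
      Bornology.IsBounded (connectedComponentIn Xᶜ q) := by
  by_contra! h
  obtain ⟨R, hR⟩ := hX.subset_closedBall 0
  have key : ∀ y, ¬ Bornology.IsBounded (connectedComponentIn Xᶜ y) →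
      (closedBall (0 : ℂ) R)ᶜ ⊆ connectedComponentIn Xᶜ y := by
    intro y hy
    obtain ⟨z, hz, hzR⟩ := not_subset.1 fun h ↦ hy (isBounded_closedBall.subset h)
    rw [connectedComponentIn_eq hz]
    exact (isPreconnected_compl_closedBall R).subset_connectedComponentIn hzR
      (compl_subset_compl.2 hR)
  obtain ⟨z, hz, hzR⟩ := not_subset.1 fun h' ↦
    h.1 ((isBounded_closedBall (x := (0 : ℂ)) (r := R)).subset h')
  have h1 := connectedComponentIn_eq hz
  have h2 := connectedComponentIn_eq (key q h.2 hzR)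
  rw [h1, ← h2] at hpq
  exact hpq (mem_connectedComponentIn hq)

/-- A bounded complementary component of a closed subset of a full set is contained in the
full set. -/
theorem IsFull.connectedComponentIn_subset {K X : Set ℂ} (hK : IsFull K) (hXK : X ⊆ K) {p : ℂ}
    (hb : Bornology.IsBounded (connectedComponentIn Xᶜ p)) : connectedComponentIn Xᶜ p ⊆ K := by
  intro y hy
  by_contra hyK
  refine hK y hyK (hb.subset ?_)
  rw [connectedComponentIn_eq hy]
  exact connectedComponentIn_mono y (compl_subset_compl.2 hXK)

/-- If a bounded complementary component of `A ∪ B ⊆ K` meets a component of the interior of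
`K` whose closure misses `B`, then its frontier lies in `A`. -/
theorem IsFull.frontier_connectedComponentIn_subset {K A B : Set ℂ} (hK : IsFull K)
    (hc : IsClosed (A ∪ B)) (hXK : A ∪ B ⊆ K) {x p : ℂ}
    (hp : p ∈ connectedComponentIn (interior K) x) (hpX : p ∈ (A ∪ B)ᶜ)
    (hB : Disjoint B (closure (connectedComponentIn (interior K) x)))
    (hb : Bornology.IsBounded (connectedComponentIn (A ∪ B)ᶜ p)) :
    frontier (connectedComponentIn (A ∪ B)ᶜ p) ⊆ A := by
  have hD : connectedComponentIn (A ∪ B)ᶜ p ⊆ connectedComponentIn (interior K) x := by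
    rw [connectedComponentIn_eq hp]
    exact isPreconnected_connectedComponentIn.subset_connectedComponentIn
      (mem_connectedComponentIn hpX) (interior_maximal (hK.connectedComponentIn_subset hXK hb)
      hc.isOpen_compl.connectedComponentIn)
  intro z hz
  rcases frontier_connectedComponentIn_compl_subset hc p hz with h | h
  · exact h
  · exact (hB.le_bot ⟨h, closure_mono hD hz.1⟩).elim

/-- In a full set, two disjoint closed sets joined by a segment inside a component `U` of the
interior are not joined by a connected set missing the closure of `U`. -/
theorem IsFull.false_of_crossing {K : Set ℂ} (hK : IsFull K) {x s₁ s₂ : ℂ} {E₁ E₂ B : Set ℂ}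
    (hs : s₁ ≠ s₂) (hE₁ : IsClosed E₁) (hE₂ : IsClosed E₂) (hE : Disjoint E₁ E₂)
    (hs₁ : s₁ ∈ E₁) (hs₂ : s₂ ∈ E₂) (hsE₁ : segment ℝ s₁ s₂ ∩ E₁ ⊆ {s₁})
    (hsE₂ : segment ℝ s₁ s₂ ∩ E₂ ⊆ {s₂})
    (hsU : segment ℝ s₁ s₂ ⊆ connectedComponentIn (interior K) x)
    (hL : IsPreconnected (E₁ ∪ E₂ ∪ B)) (hLc : IsCompact (E₁ ∪ E₂ ∪ B)) (hLK : E₁ ∪ E₂ ∪ B ⊆ K)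
    (hB : Disjoint B (closure (connectedComponentIn (interior K) x))) : False := by
  set U := connectedComponentIn (interior K) x with hU
  set L := E₁ ∪ E₂ ∪ B with hLdef
  set S := segment ℝ s₁ s₂ with hS
  have hUo : IsOpen U := isOpen_interior.connectedComponentIn
  set m := (s₁ + s₂) / 2 with hm
  set v := (s₂ - s₁) / 2 with hv
  have hv0 : v ≠ 0 := div_ne_zero (sub_ne_zero.2 hs.symm) two_ne_zero
  have hmS : m ∈ S := ⟨1 / 2, 1 / 2, by norm_num, by norm_num, by norm_num, by
    simp only [Complex.real_smul, hm]; push_cast; ring⟩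
  have hmL : m ∉ L := by
    rintro ((h | h) | h)
    · have : m = s₁ := hsE₁ ⟨hmS, h⟩
      apply hs; rw [hm] at this; linear_combination -2 * this
    · have : m = s₂ := hsE₂ ⟨hmS, h⟩
      apply hs; rw [hm] at this; linear_combination 2 * this
    · exact hB.le_bot ⟨h, subset_closure (hsU hmS)⟩
  obtain ⟨ε, hε, hball⟩ := Metric.isOpen_iff.1 (hUo.inter hLc.isClosed.isOpen_compl) m
    ⟨hsU hmS, hmL⟩
  have hvn : 0 < ‖v‖ := norm_pos_iff.2 hv0
  obtain ⟨δ, hδ, hδε⟩ : ∃ δ : ℝ, 0 < δ ∧ δ * ‖v‖ < ε :=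
    ⟨ε / ‖v‖ / 2, by positivity, by field_simp; linarith⟩
  obtain ⟨p, hp⟩ : ∃ p, p = m + δ * Complex.I * v := ⟨_, rfl⟩
  obtain ⟨q, hq⟩ : ∃ q, q = m - δ * Complex.I * v := ⟨_, rfl⟩
  have hpb : p ∈ ball m ε := by simpa [hp, abs_of_pos hδ] using hδε
  have hqb : q ∈ ball m ε := by simpa [hq, abs_of_pos hδ] using hδε
  have hpqb := (convex_ball m ε).segment_subset hpb hqb
  obtain ⟨h, hc, hexp, e1, e2⟩ := exists_log_on_segment hs hδ hp hq
  have hpX : p ∈ (S ∪ E₁ ∪ E₂ ∪ B)ᶜ := by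
    rw [union_assoc S, union_assoc S]
    rintro (h' | h')
    · have := hexp p h'
      simp [Complex.exp_ne_zero] at this
    · exact (hball hpb).2 h'
  have hqX : q ∈ (S ∪ E₁ ∪ E₂ ∪ B)ᶜ := by
    rw [union_assoc S, union_assoc S]
    rintro (h' | h')
    · have := hexp q h'
      simp [Complex.exp_ne_zero] at this
    · exact (hball hqb).2 h'
  have hXL : S ∪ E₁ ∪ E₂ ∪ B = S ∪ L := by rw [union_assoc S, union_assoc S]
  have hXc : IsClosed (S ∪ E₁ ∪ E₂ ∪ B) := by
    rw [hXL]; exact (isClosed_segment s₁ s₂).union hLc.isClosed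
  have hXK : S ∪ E₁ ∪ E₂ ∪ B ⊆ K := by
    rw [hXL]
    exact union_subset
      (hsU.trans ((_root_.connectedComponentIn_subset _ _).trans interior_subset)) hLK
  have hXb : Bornology.IsBounded (S ∪ E₁ ∪ E₂ ∪ B) := by
    rw [hXL, hS, segment_eq_image]
    exact (isCompact_Icc.image (by fun_prop)).isBounded.union hLc.isBounded
  have hqp : q ∉ connectedComponentIn (S ∪ E₁ ∪ E₂ ∪ B)ᶜ p := by
    intro hq'
    refine not_isPreconnected_of_crossing hs hδ hp hq hL hLc.isClosed (Or.inl (Or.inl hs₁))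
      (Or.inl (Or.inr hs₂))
      (disjoint_left.2 fun z hz hz' ↦ (hball (hpqb hz')).2 hz)
      (isPreconnected_connectedComponentIn (F := (S ∪ E₁ ∪ E₂ ∪ B)ᶜ) (x := p)) ?_
      (mem_connectedComponentIn hpX) hq'
    rw [← hS, ← hXL]
    exact disjoint_compl_left.mono_left (_root_.connectedComponentIn_subset _ _)
  have hpq : p ∉ connectedComponentIn (S ∪ E₁ ∪ E₂ ∪ B)ᶜ q := by
    intro h'
    rw [← connectedComponentIn_eq h'] at hqp
    exact hqp (mem_connectedComponentIn hqX)
  have hqcl : q ∉ closure (connectedComponentIn (S ∪ E₁ ∪ E₂ ∪ B)ᶜ p) := fun h' ↦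
    hqX (frontier_connectedComponentIn_compl_subset hXc p
      ⟨h', fun hi ↦ hqp (interior_subset hi)⟩)
  have hpcl : p ∉ closure (connectedComponentIn (S ∪ E₁ ∪ E₂ ∪ B)ᶜ q) := fun h' ↦
    hpX (frontier_connectedComponentIn_compl_subset hXc q
      ⟨h', fun hi ↦ hpq (interior_subset hi)⟩)
  obtain ⟨φ, hφ, hφexp⟩ : ∃ φ : ℂ → ℂ, ContinuousOn φ (S ∪ E₁ ∪ E₂) ∧
      ∀ z ∈ S ∪ E₁ ∪ E₂, Complex.exp (φ z) = (z - p) / (z - q) := by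
    have hsl : ∀ z ∈ E₁ ∪ E₂, (z - p) / (z - q) ∈ Complex.slitPlane := fun z hz ↦
      div_mem_slitPlane_of_notMem_segment fun h ↦ (hball (hpqb h)).2 (Or.inl hz)
    have hqL : ∀ z ∈ E₁ ∪ E₂, z - q ≠ 0 := fun z hz h ↦
      (hball hqb).2 (by rw [← sub_eq_zero.1 h]; exact Or.inl hz)
    have hg : ContinuousOn (fun z ↦ Complex.log ((z - p) / (z - q))) (E₁ ∪ E₂) :=
      ContinuousOn.clog (ContinuousOn.div (by fun_prop) (by fun_prop) hqL) hsl
    have hgexp : ∀ z ∈ E₁ ∪ E₂, Complex.exp (Complex.log ((z - p) / (z - q))) =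
        (z - p) / (z - q) := fun z hz ↦ Complex.exp_log (Complex.slitPlane_ne_zero (hsl z hz))
    obtain ⟨χ, hχ, hχ1, hχ2⟩ := ContinuousOn.exists_glue (isClosed_segment s₁ s₂) hE₁ hc
      (hg.mono subset_union_left) (fun z hz hz' ↦ by
        rw [mem_singleton_iff.1 (hsE₁ ⟨hz, hz'⟩), e1])
    obtain ⟨ξ, hξ, hξ1, hξ2⟩ := ContinuousOn.exists_glue ((isClosed_segment s₁ s₂).union hE₁) hE₂ hχ
      (ψ := fun z ↦ Complex.log ((z - p) / (z - q)) + 2 * Real.pi * Complex.I)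
      ((hg.mono subset_union_right).add continuousOn_const) (by
        rintro z (hz | hz) hz'
        · rw [hχ1 hz, mem_singleton_iff.1 (hsE₂ ⟨hz, hz'⟩), e2]
        · exact (hE.le_bot ⟨hz, hz'⟩).elim)
    refine ⟨ξ, hξ, ?_⟩
    rintro z ((hz | hz) | hz)
    · rw [hξ1 (Or.inl hz), hχ1 hz, hexp z hz]
    · rw [hξ1 (Or.inr hz), hχ2 hz, hgexp z (Or.inl hz)]
    · rw [hξ2 hz]
      simp only
      rw [Complex.exp_add, Complex.exp_two_pi_mul_I, mul_one, hgexp z (Or.inr hz)]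
  rcases isBounded_connectedComponentIn_or hXb hqX hqp with hb | hb
  · exact not_exists_log_on_frontier hb (hK.frontier_connectedComponentIn_subset hXc hXK
      (hball hpb).1 hpX hB hb) (mem_connectedComponentIn hpX) hqcl hφ hφexp
  · exact not_exists_log_on_frontier hb (hK.frontier_connectedComponentIn_subset hXc hXK
      (hball hqb).1 hqX hB hb) (mem_connectedComponentIn hqX) hpcl hφ.neg
      (fun z hz ↦ by rw [Pi.neg_apply, Complex.exp_neg, hφexp z hz, inv_div])

/-- A path in the plane made of segments between points of `K` which lie together in a connected
subset of `K` contained in a ball of radius `ε`. -/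
inductive IsChainPath (K : Set ℂ) (ε : ℝ) : ∀ {a b : ℂ}, Path a b → Prop
  | segment {a b c : ℂ} {T : Set ℂ} (hT : IsPreconnected T) (hTK : T ⊆ K) (hTc : T ⊆ ball c ε)
      (ha : a ∈ T) (hb : b ∈ T) : IsChainPath K ε (Path.segment a b)
  | trans {a b c : ℂ} {γ : Path a b} {γ' : Path b c} (h : IsChainPath K ε γ)
      (h' : IsChainPath K ε γ') : IsChainPath K ε (γ.trans γ')

theorem Path.segment_mem_of_convex {s : Set ℂ} (hs : Convex ℝ s) {a b : ℂ} (ha : a ∈ s)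
    (hb : b ∈ s) (t : unitInterval) : Path.segment a b t ∈ s := by
  have : Path.segment a b t ∈ range (Path.segment a b) := mem_range_self t
  rw [Path.range_segment] at this
  exact hs.segment_subset ha hb this

theorem Path.forall_trans {X : Type*} [TopologicalSpace X] {a b c : X} {γ : Path a b}
    {γ' : Path b c} {s : Set X} (h : ∀ t, γ t ∈ s) (h' : ∀ t, γ' t ∈ s) (t : unitInterval) :
    γ.trans γ' t ∈ s := by
  rw [Path.trans_apply]
  split_ifs
  · exact h _
  · exact h' _

theorem IsPreconnected.exists_isChainPath {K : Set ℂ}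
    (hlc : ∀ z ∈ K, ∀ U ∈ nhds z, ∃ V ∈ nhds z, V ⊆ U ∧ IsConnected (V ∩ K))
    {T s : Set ℂ} (hT : IsPreconnected T) (hTK : T ⊆ K)
    (hs : Convex ℝ s) (hTs : T ⊆ s) {ε : ℝ} (hε : 0 < ε) {a b : ℂ} (ha : a ∈ T) (hb : b ∈ T) :
    ∃ γ : Path a b, IsChainPath K ε γ ∧ ∀ t, γ t ∈ s := by
  refine hT.induction₂' (fun a b ↦ ∃ γ : Path a b, IsChainPath K ε γ ∧ ∀ t, γ t ∈ s) ?_ ?_ ha hb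
  · intro a ha
    obtain ⟨V, hV, hVb, hVK⟩ := hlc a (hTK ha) _ (ball_mem_nhds a hε)
    filter_upwards [self_mem_nhdsWithin, mem_nhdsWithin_of_mem_nhds hV] with b hb hbV
    have haV : a ∈ V ∩ K := ⟨mem_of_mem_nhds hV, hTK ha⟩
    have hbV : b ∈ V ∩ K := ⟨hbV, hTK hb⟩
    have h1 : V ∩ K ⊆ ball a ε := inter_subset_left.trans hVb
    exact ⟨⟨_, .segment hVK.isPreconnected inter_subset_right h1 haV hbV,
        Path.segment_mem_of_convex hs (hTs ha) (hTs hb)⟩,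
      ⟨_, .segment hVK.isPreconnected inter_subset_right h1 hbV haV,
        Path.segment_mem_of_convex hs (hTs hb) (hTs ha)⟩⟩
  · rintro x y z - - - ⟨γ, hγ, h⟩ ⟨γ', hγ', h'⟩
    exact ⟨γ.trans γ', hγ.trans hγ', Path.forall_trans h h'⟩

theorem IsChainPath.exists_refinement {K : Set ℂ}
    (hlc : ∀ z ∈ K, ∀ U ∈ nhds z, ∃ V ∈ nhds z, V ⊆ U ∧ IsConnected (V ∩ K))
    {ε δ : ℝ} (hδ : 0 < δ) {a b : ℂ} {γ : Path a b}
    (h : IsChainPath K ε γ) :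
    ∃ γ' : Path a b, IsChainPath K δ γ' ∧ ∀ t, dist (γ t) (γ' t) ≤ 2 * ε := by
  induction h with
  | @segment a b c T hT hTK hTc ha hb =>
    obtain ⟨γ', hγ', h⟩ := hT.exists_isChainPath hlc hTK (convex_ball c ε) hTc hδ ha hb
    refine ⟨γ', hγ', fun t ↦ ?_⟩
    have h1 := mem_ball.1 (Path.segment_mem_of_convex (convex_ball c ε) (hTc ha) (hTc hb) t)
    have h2 := mem_ball.1 (h t)
    linarith [dist_triangle_right (Path.segment a b t) (γ' t) c]
  | trans _ _ ih ih' =>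
    obtain ⟨γ₁, h₁, d₁⟩ := ih
    obtain ⟨γ₂, h₂, d₂⟩ := ih'
    refine ⟨γ₁.trans γ₂, h₁.trans h₂, fun t ↦ ?_⟩
    rw [Path.trans_apply, Path.trans_apply]
    split_ifs
    · exact d₁ _
    · exact d₂ _

theorem IsChainPath.exists_dist_le {K : Set ℂ} {ε : ℝ} {a b : ℂ} {γ : Path a b}
    (h : IsChainPath K ε γ) (t : unitInterval) : ∃ y ∈ K, dist (γ t) y ≤ 2 * ε := by
  induction h generalizing t with
  | @segment a b c T hT hTK hTc ha hb =>
    refine ⟨a, hTK ha, ?_⟩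
    have h1 := mem_ball.1 (Path.segment_mem_of_convex (convex_ball c ε) (hTc ha) (hTc hb) t)
    linarith [dist_triangle_right (Path.segment a b t) a c, mem_ball.1 (hTc ha)]
  | trans _ _ ih ih' =>
    rw [Path.trans_apply]
    split_ifs
    · exact ih _
    · exact ih' _

/-- Points of a connected subset of `K` contained in a small ball are joined in `K` by a path
contained in a slightly larger ball. -/
theorem IsPreconnected.joinedIn_inter_ball {K : Set ℂ} (hK : IsClosed K)
    (hlc : ∀ z ∈ K, ∀ U ∈ nhds z, ∃ V ∈ nhds z, V ⊆ U ∧ IsConnected (V ∩ K))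
    {T : Set ℂ} (hT : IsPreconnected T) (hTK : T ⊆ K) {c : ℂ} {r : ℝ} (hr : 0 < r)
    (hTc : T ⊆ ball c r) {a b : ℂ} (ha : a ∈ T) (hb : b ∈ T) :
    JoinedIn (K ∩ ball c (6 * r)) a b := by
  set ε : ℕ → ℝ := fun n ↦ r / 2 ^ n with hε
  have hε0 : ∀ n, 0 < ε n := fun n ↦ by positivity
  let γ : ∀ n, {γ : Path a b // IsChainPath K (ε n) γ} := fun n ↦ Nat.rec
    ⟨Path.segment a b, by simpa [hε] using IsChainPath.segment hT hTK hTc ha hb⟩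
    (fun n γ ↦ ⟨(γ.2.exists_refinement hlc (hε0 (n + 1))).choose,
      (γ.2.exists_refinement hlc (hε0 (n + 1))).choose_spec.1⟩) n
  have hγ : ∀ n t, dist ((γ n).1 t) ((γ (n + 1)).1 t) ≤ 4 * r / 2 / 2 ^ n := fun n t ↦ by
    refine (((γ n).2.exists_refinement hlc (hε0 (n + 1))).choose_spec.2 t).trans_eq ?_
    simp only [hε]; ring
  choose g hg using fun t ↦ cauchySeq_tendsto_of_complete
    (cauchySeq_of_le_geometric_two (fun n ↦ hγ n t))
  have hd : ∀ n t, dist ((γ n).1 t) (g t) ≤ 4 * r / 2 ^ n := fun n t ↦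
    dist_le_of_le_geometric_two_of_tendsto (fun n ↦ hγ n t) (hg t) n
  have hlim : Tendsto (fun n : ℕ ↦ 4 * r / 2 ^ n) atTop (𝓝 0) :=
    tendsto_const_nhds.div_atTop (tendsto_pow_atTop_atTop_of_one_lt one_lt_two)
  have hgc : Continuous g := by
    refine TendstoUniformly.continuous (F := fun n ↦ ((γ n).1 : unitInterval → ℂ)) (p := atTop)
      (Metric.tendstoUniformly_iff.2 fun η hη ↦ ?_)
      (Eventually.of_forall fun n ↦ (γ n).1.continuous).frequently
    filter_upwards [hlim.eventually (gt_mem_nhds hη)] with n hn t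
    rw [dist_comm]
    exact (hd n t).trans_lt hn
  have hg0 : g 0 = a := tendsto_nhds_unique (hg 0) (by simp)
  have hg1 : g 1 = b := tendsto_nhds_unique (hg 1) (by simp)
  refine ⟨⟨⟨g, hgc⟩, hg0, hg1⟩, fun t ↦ ⟨?_, ?_⟩⟩
  · choose y hy hyd using fun n ↦ (γ n).2.exists_dist_le t
    refine hK.mem_of_tendsto (b := atTop) (f := y) ?_ (Eventually.of_forall hy)
    refine tendsto_iff_dist_tendsto_zero.2 (squeeze_zero (fun _ ↦ dist_nonneg) (fun n ↦ ?_)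
      (by simpa using hlim.add hlim))
    refine (dist_triangle_left (y n) (g t) ((γ n).1 t)).trans
      (add_le_add ((hyd n).trans ?_) (hd n t))
    simp only [hε]
    rw [mul_div_assoc]
    gcongr
    norm_num
  · have h0 := hd 0 t
    have h1 : (γ 0).1 t ∈ ball c r :=
      Path.segment_mem_of_convex (convex_ball c r) (hTc ha) (hTc hb) t
    rw [dist_comm] at h0
    have h1 := mem_ball.1 h1
    simp only [Path.coe_mk_mk, mem_ball]
    norm_num at h0
    linarith [dist_triangle (g t) ((γ 0).1 t) c]

/-- A connected set in a relatively open subset of a closed locally connected set `K` is joined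
by paths in this subset. -/
theorem IsPreconnected.joinedIn_inter {K : Set ℂ} (hK : IsClosed K)
    (hlc : ∀ z ∈ K, ∀ U ∈ nhds z, ∃ V ∈ nhds z, V ⊆ U ∧ IsConnected (V ∩ K))
    {T O : Set ℂ} (hT : IsPreconnected T) (hO : IsOpen O) (hTK : T ⊆ K ∩ O)
    {a b : ℂ} (ha : a ∈ T) (hb : b ∈ T) : JoinedIn (K ∩ O) a b := by
  refine hT.induction₂ (fun a b ↦ JoinedIn (K ∩ O) a b) ?_
    (fun _ _ _ _ _ _ h h' ↦ h.trans h') (fun _ _ _ _ h ↦ h.symm) ha hb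
  intro a ha
  obtain ⟨ρ, hρ, hball⟩ := Metric.isOpen_iff.1 hO a (hTK ha).2
  obtain ⟨V, hV, hVb, hVK⟩ := hlc a (hTK ha).1 _ (ball_mem_nhds a (show 0 < ρ / 6 by positivity))
  filter_upwards [self_mem_nhdsWithin, mem_nhdsWithin_of_mem_nhds hV] with b hb hbV
  refine (hVK.isPreconnected.joinedIn_inter_ball hK hlc inter_subset_right
    (show 0 < ρ / 6 by positivity) (inter_subset_left.trans hVb)
    ⟨mem_of_mem_nhds hV, (hTK ha).1⟩ ⟨hbV, (hTK hb).1⟩).mono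
    (inter_subset_inter_right K (Subset.trans ?_ hball))
  rw [mul_div_cancel₀ _ (by norm_num)]

/-- A connected subset of `K` disjoint from the closure of a component of the interior of `K`
accumulates at no more than one point of this closure. -/
theorem IsFull.eq_of_mem_closure_inter {K : Set ℂ} (hfull : IsFull K) (hK : IsCompact K)
    (hlc : ∀ z ∈ K, ∀ U ∈ nhds z, ∃ V ∈ nhds z, V ⊆ U ∧ IsConnected (V ∩ K))
    {x : ℂ} {C : Set ℂ} (hC : IsPreconnected C)
    (hCK : C ⊆ K \ closure (connectedComponentIn (interior K) x)) {w₁ w₂ : ℂ}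
    (h₁C : w₁ ∈ closure C) (h₁U : w₁ ∈ closure (connectedComponentIn (interior K) x))
    (h₂C : w₂ ∈ closure C) (h₂U : w₂ ∈ closure (connectedComponentIn (interior K) x)) :
    w₁ = w₂ := by
  by_contra hne
  set U := connectedComponentIn (interior K) x with hU
  have hUo : IsOpen U := isOpen_interior.connectedComponentIn
  have hUK : U ⊆ K := (_root_.connectedComponentIn_subset _ _).trans interior_subset
  have hr : 0 < dist w₁ w₂ / 3 := by have := dist_pos.2 hne; positivity
  set r := dist w₁ w₂ / 3 with hrd
  have key : ∀ w ∈ closure C, w ∈ closure U → ∃ N ⊆ K, N ⊆ closedBall w r ∧ IsCompact N ∧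
      IsPreconnected N ∧ (N ∩ U).Nonempty ∧ (N ∩ C).Nonempty := by
    intro w hwC hwU
    obtain ⟨V, hV, hVb, hVK⟩ :=
      hlc w (closure_minimal hUK hK.isClosed hwU) _ (ball_mem_nhds w hr)
    obtain ⟨u, hu⟩ := mem_closure_iff_nhds.1 hwU V hV
    obtain ⟨c, hc⟩ := mem_closure_iff_nhds.1 hwC V hV
    have hNK : closure (V ∩ K) ⊆ K := closure_minimal inter_subset_right hK.isClosed
    refine ⟨closure (V ∩ K), hNK, closure_minimal
      ((inter_subset_left.trans hVb).trans ball_subset_closedBall) isClosed_closedBall,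
      hK.of_isClosed_subset isClosed_closure hNK, hVK.isPreconnected.closure,
      ⟨u, subset_closure ⟨hu.1, hUK hu.2⟩, hu.2⟩, ⟨c, subset_closure ⟨hc.1, (hCK hc.2).1⟩, hc.2⟩⟩
  obtain ⟨N₁, h₁K, h₁b, h₁c, h₁p, ⟨u₁, hu₁, hu₁U⟩, ⟨c₁, hc₁, hc₁C⟩⟩ := key w₁ h₁C h₁U
  obtain ⟨N₂, h₂K, h₂b, h₂c, h₂p, ⟨u₂, hu₂, hu₂U⟩, ⟨c₂, hc₂, hc₂C⟩⟩ := key w₂ h₂C h₂U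
  have hN : ∀ p ∈ N₁, r ≤ infDist p N₂ := fun p hp ↦ by
    refine (le_infDist ⟨u₂, hu₂⟩).2 fun {q} hq ↦ ?_
    have h1 := mem_closedBall.1 (h₁b hp)
    have h2 := mem_closedBall.1 (h₂b hq)
    rw [dist_comm] at h1
    linarith [dist_triangle4 w₁ p q w₂]
  obtain ⟨γ, hγ⟩ : JoinedIn U u₁ u₂ :=
    (hUo.isConnected_iff_isPathConnected.1 ⟨⟨u₁, hu₁U⟩, isPreconnected_connectedComponentIn⟩
      ).joinedIn u₁ hu₁U u₂ hu₂U
  obtain ⟨δ, hδ, hδU⟩ := (isCompact_range γ.continuous).exists_cthickening_subset_open hUo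
    (range_subset_iff.2 hγ)
  obtain ⟨ε, hε, hεm⟩ := exists_between (lt_min hδ hr)
  obtain ⟨hεδ, hεr⟩ := lt_min_iff.1 hεm
  have hfc : Continuous fun t ↦ infDist (γ t) N₂ := (continuous_infDist_pt N₂).comp γ.continuous
  have hf0 : r ≤ infDist (γ 0) N₂ := hN _ (by simpa using hu₁)
  have hf1 : infDist (γ 1) N₂ = 0 := infDist_zero_of_mem (by simpa using hu₂)
  obtain ⟨t, htZ, htl⟩ := (isClosed_le hfc continuous_const).isCompact.exists_isLeast
    (⟨1, hf1.le.trans hε.le⟩ : {t | infDist (γ t) N₂ ≤ ε}.Nonempty)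
  have htε : infDist (γ t) N₂ = ε := by
    obtain ⟨s, hs, hsε⟩ := intermediate_value_Icc' (zero_le : 0 ≤ t)
      hfc.continuousOn ⟨htZ, (hεr.trans_le hf0).le⟩
    rwa [← le_antisymm hs.2 (htl (le_of_eq hsε))]
  have hlt : ∀ s ≤ t, ε ≤ infDist (γ s) N₂ := fun s hs ↦ by
    by_contra! h
    rw [le_antisymm hs (htl h.le), htε] at h
    exact h.false
  obtain ⟨s₂, hs₂, hs₂d⟩ := h₂c.exists_infDist_eq_dist ⟨u₂, hu₂⟩ (γ t)
  rw [htε] at hs₂d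
  have hE₁ : ∀ p ∈ N₁ ∪ γ '' Icc 0 t, ε ≤ infDist p N₂ := by
    rintro p (hp | ⟨s, hs, rfl⟩)
    · exact hεr.le.trans (hN p hp)
    · exact hlt s hs.2
  have hΓc : IsCompact (γ '' Icc 0 t) := isCompact_Icc.image γ.continuous
  obtain ⟨β, hβ⟩ : JoinedIn (K ∩ (closure U)ᶜ) c₁ c₂ :=
    hC.joinedIn_inter hK.isClosed hlc isClosed_closure.isOpen_compl hCK hc₁C hc₂C
  refine hfull.false_of_crossing (s₁ := γ t) (s₂ := s₂) (E₁ := N₁ ∪ γ '' Icc 0 t) (E₂ := N₂)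
    (B := range β) (x := x) (dist_pos.1 (hs₂d ▸ hε)) (h₁c.union hΓc).isClosed h₂c.isClosed
    (disjoint_left.2 fun p hp hp2 ↦ ?_) (.inr ⟨t, ⟨zero_le, le_rfl⟩, rfl⟩) hs₂ ?_ ?_ ?_ ?_
    (((h₁c.union hΓc).union h₂c).union (isCompact_range β.continuous)) ?_ ?_
  · have := hE₁ p hp
    rw [infDist_zero_of_mem hp2] at this
    exact this.not_gt hε
  · rintro p ⟨hp, hpE⟩
    have h1 := dist_add_dist_of_mem_segment hp
    have h2 := (hE₁ p hpE).trans (infDist_le_dist_of_mem hs₂)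
    exact (dist_le_zero.1 (by linarith)).symm
  · rintro p ⟨hp, hpE⟩
    have h1 := dist_add_dist_of_mem_segment hp
    have h2 := infDist_le_dist_of_mem (x := γ t) hpE
    exact dist_le_zero.1 (by linarith)
  · intro p hp
    refine hδU (mem_cthickening_of_dist_le p (γ t) δ _ (mem_range_self t) ?_)
    have h1 := dist_add_dist_of_mem_segment hp
    rw [dist_comm]
    linarith [dist_nonneg (x := p) (y := s₂)]
  · have hΓp : IsPreconnected (γ '' Icc 0 t) := isPreconnected_Icc.image _ γ.continuous.continuousOn
    have hβp : IsPreconnected (range β) := isPreconnected_range β.continuous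
    rw [union_assoc]
    refine IsPreconnected.union c₁ (.inl hc₁) (.inr ⟨0, by simp⟩) ?_ ?_
    · exact h₁p.union u₁ hu₁ ⟨0, ⟨le_rfl, zero_le⟩, by simp⟩ hΓp
    · exact h₂p.union c₂ hc₂ ⟨1, by simp⟩ hβp
  · refine union_subset (union_subset (union_subset h₁K ?_) h₂K)
      (range_subset_iff.2 fun t ↦ (hβ t).1)
    rintro _ ⟨s, -, rfl⟩
    exact hUK (hγ s)
  · rw [disjoint_left]
    rintro _ ⟨t, rfl⟩
    exact (hβ t).2

theorem IsClosed.interior_closure_connectedComponentIn_interior {X : Type*} [TopologicalSpace X]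
    [LocallyConnectedSpace X] {K : Set X} (hK : IsClosed K) (x : X) :
    interior (closure (connectedComponentIn (interior K) x)) =
      connectedComponentIn (interior K) x := by
  set U := connectedComponentIn (interior K) x with hU
  have hUo : IsOpen U := isOpen_interior.connectedComponentIn
  have hUK : U ⊆ interior K := connectedComponentIn_subset _ _
  refine subset_antisymm (fun p hp ↦ ?_) (interior_maximal subset_closure hUo)
  have hpK : p ∈ interior K :=
    interior_mono (closure_minimal (hUK.trans interior_subset) hK) hp
  obtain ⟨u, hu⟩ := closure_nonempty_iff.1 ⟨p, interior_subset hp⟩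
  have hsub : insert p U ⊆ connectedComponentIn (interior K) u :=
    (isPreconnected_connectedComponentIn.subset_closure (subset_insert p U)
      (insert_subset (interior_subset hp) subset_closure)).subset_connectedComponentIn
      (.inr hu) (insert_subset hpK hUK)
  rw [hU, connectedComponentIn_eq hu]
  exact hsub (mem_insert p U)

/-- A connected subset of `K` joining a point `a` outside of the closed set `F` to a point of `F`
meets `F` at a point of the closure of the component of `a` in `K \ F`. -/
theorem exists_mem_closure_connectedComponentIn_diff {K F T : Set ℂ}
    (hlc : ∀ z ∈ K, ∀ U ∈ nhds z, ∃ V ∈ nhds z, V ⊆ U ∧ IsConnected (V ∩ K))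
    (hF : IsClosed F) (hT : IsPreconnected T) (hTK : T ⊆ K) {a b : ℂ} (ha : a ∈ T) (haF : a ∉ F)
    (hb : b ∈ T) (hbF : b ∈ F) :
    ∃ w ∈ T, w ∈ F ∧ w ∈ closure (connectedComponentIn (K \ F) a) := by
  by_contra! h
  set C := connectedComponentIn (K \ F) a with hC
  have hCF : C ⊆ K \ F := connectedComponentIn_subset _ _
  have haC : a ∈ C := mem_connectedComponentIn ⟨hTK ha, haF⟩
  have key : ∀ p ∈ K \ F, ∃ V ∈ nhds p, p ∈ V ∩ K ∧ V ∩ K ⊆ K \ F ∧ IsPreconnected (V ∩ K) := by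
    intro p hp
    obtain ⟨V, hV, hVF, hVK⟩ := hlc p hp.1 _ (hF.isOpen_compl.mem_nhds hp.2)
    exact ⟨V, hV, ⟨mem_of_mem_nhds hV, hp.1⟩, fun q hq ↦ ⟨hq.2, hVF hq.1⟩, hVK.isPreconnected⟩
  have hop : C ⊆ interior (C ∪ Kᶜ) := by
    intro p hp
    obtain ⟨V, hV, hpV, hVF, hVK⟩ := key p (hCF hp)
    refine mem_interior_iff_mem_nhds.2 (mem_of_superset hV fun q hq ↦ ?_)
    by_cases hqK : q ∈ K
    · left
      rw [hC, connectedComponentIn_eq hp]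
      exact hVK.subset_connectedComponentIn hpV hVF ⟨hq, hqK⟩
    · exact .inr hqK
  have hcl : ∀ p ∈ K \ F, p ∈ closure C → p ∈ C := by
    intro p hp hpC
    obtain ⟨V, hV, hpV, hVF, hVK⟩ := key p hp
    obtain ⟨q, hqV, hqC⟩ := mem_closure_iff_nhds.1 hpC V hV
    rw [hC, connectedComponentIn_eq hqC]
    exact hVK.subset_connectedComponentIn ⟨hqV, (hCF hqC).1⟩ hVF hpV
  have hcov : T ⊆ interior (C ∪ Kᶜ) ∪ (closure C)ᶜ := fun p hp ↦ by
    by_cases hpC : p ∈ closure C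
    · exact .inl (hop (hcl p ⟨hTK hp, fun hpF ↦ h p hp hpF hpC⟩ hpC))
    · exact .inr hpC
  obtain ⟨p, hpT, hpG, hpC⟩ := hT _ _ isOpen_interior isClosed_closure.isOpen_compl hcov
    ⟨a, ha, hop haC⟩ ⟨b, hb, h b hb hbF⟩
  rcases interior_subset hpG with hp | hp
  · exact hpC (subset_closure hp)
  · exact hp (hTK hpT)

/-- Let `K ⊂ ℂ` be compact, connected, full and locally connected, and let `K₀` be the
closure of a connected component of the interior of `K`. For any `z` in the interior of
`K₀` and any `z' ∈ K ∖ K₀` there is a unique point `w ∈ ∂K₀` through which every path in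
`K` from `z'` to `z` passes; moreover `w` disconnects `K`, with `z` and `z'` in different
connected components of `K ∖ {w}`. -/
theorem projection_onto_interior_component (K : Set ℂ)
    (hK : IsCompact K) (hconn : IsConnected K) (hfull : IsFull K)
    (hlc : ∀ z ∈ K, ∀ U ∈ nhds z, ∃ V ∈ nhds z, V ⊆ U ∧ IsConnected (V ∩ K))
    (x : ℂ) (hx : x ∈ interior K)
    (K₀ : Set ℂ) (hK₀ : K₀ = closure (connectedComponentIn (interior K) x))
    (z : ℂ) (hz : z ∈ interior K₀) (z' : ℂ) (hz' : z' ∈ K \ K₀) :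
    ∃ w ∈ frontier K₀,
      (∀ γ : ℝ → ℂ, IsPathIn K γ z' z → w ∈ γ '' Set.Icc 0 1) ∧
      (∀ w' ∈ frontier K₀,
        (∀ γ : ℝ → ℂ, IsPathIn K γ z' z → w' ∈ γ '' Set.Icc 0 1) → w' = w) ∧
      ¬ IsPreconnected (K \ {w}) ∧
      connectedComponentIn (K \ {w}) z ≠ connectedComponentIn (K \ {w}) z' := by
  subst hK₀
  set U := connectedComponentIn (interior K) x with hU
  have hUo : IsOpen U := isOpen_interior.connectedComponentIn
  have hUint : interior (closure U) = U :=
    hK.isClosed.interior_closure_connectedComponentIn_interior x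
  have hUK : closure U ⊆ K := closure_minimal
    ((connectedComponentIn_subset _ _).trans interior_subset) hK.isClosed
  rw [hUint] at hz
  have hzK : z ∈ K := hUK (subset_closure hz)
  set C := connectedComponentIn (K \ closure U) z' with hC
  have hCU : C ⊆ K \ closure U := connectedComponentIn_subset _ _
  have hCp : IsPreconnected C := isPreconnected_connectedComponentIn
  have hzC : z' ∈ C := mem_connectedComponentIn hz'
  have hmeet : ∀ T ⊆ K, IsPreconnected T → z' ∈ T → z ∈ T →
      ∃ w ∈ T, w ∈ closure U ∧ w ∈ closure C := fun T hTK hT hz'T hzT ↦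
    exists_mem_closure_connectedComponentIn_diff hlc isClosed_closure hT hTK hz'T
      hz'.2 hzT (subset_closure hz)
  obtain ⟨w, -, hwU, hwC⟩ := hmeet K subset_rfl hconn.isPreconnected hz'.1 hzK
  have hmem : ∀ T ⊆ K, IsPreconnected T → z' ∈ T → z ∈ T → w ∈ T := by
    intro T hTK hT hz'T hzT
    obtain ⟨v, hvT, hvU, hvC⟩ := hmeet T hTK hT hz'T hzT
    rwa [hfull.eq_of_mem_closure_inter hK hlc hCp hCU hwC hwU hvC hvU]
  have hwnU : w ∉ U := fun h ↦ by
    obtain ⟨p, hpU, hpC⟩ := mem_closure_iff.1 hwC U hUo h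
    exact (hCU hpC).2 (subset_closure hpU)
  have hzw : z ∈ K \ {w} := ⟨hzK, fun h ↦ hwnU (h ▸ hz)⟩
  have hz'w : z' ∈ K \ {w} := ⟨hz'.1, fun h ↦ hz'.2 (h ▸ hwU)⟩
  refine ⟨w, ⟨subset_closure hwU, hUint.symm ▸ hwnU⟩, ?_, ?_, ?_, ?_⟩
  · rintro γ ⟨hγ, h0, h1, hγK⟩
    exact hmem _ hγK (isPreconnected_Icc.image γ hγ) ⟨0, by simp, h0⟩ ⟨1, by simp, h1⟩
  · intro w' hw' hγ
    by_contra hne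
    rw [isClosed_closure.frontier_eq, hUint] at hw'
    have hCw : IsPreconnected (insert w C) := hCp.subset_closure (subset_insert w C)
      (insert_subset hwC subset_closure)
    have hUw : IsPreconnected (insert w U) := isPreconnected_connectedComponentIn.subset_closure
      (subset_insert w U) (insert_subset hwU subset_closure)
    obtain ⟨γ, h⟩ : JoinedIn (K ∩ {w'}ᶜ) z' z :=
      (hCw.union w (mem_insert w C) (mem_insert w U) hUw).joinedIn_inter hK.isClosed hlc
        isOpen_compl_singleton (union_subset
          (insert_subset ⟨hUK hwU, Ne.symm hne⟩
            fun p hp ↦ ⟨(hCU hp).1, fun h ↦ (hCU hp).2 (h ▸ hw'.1)⟩)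
          (insert_subset ⟨hUK hwU, Ne.symm hne⟩
            fun p hp ↦ ⟨hUK (subset_closure hp), fun h ↦ hw'.2 (h ▸ hp)⟩))
        (.inl (.inr hzC)) (.inr (.inr hz))
    have hext : γ.extend '' Icc 0 1 ⊆ K ∩ {w'}ᶜ := by
      rintro _ ⟨t, ht, rfl⟩
      rw [γ.extend_apply ht]
      exact h _
    exact (hext (hγ γ.extend ⟨γ.continuous_extend.continuousOn, γ.extend_zero, γ.extend_one,
      hext.trans inter_subset_left⟩)).2 rfl
  · exact fun h ↦ (hmem _ sdiff_subset h hz'w hzw).2 rfl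
  · intro h
    have hsub := connectedComponentIn_subset (K \ {w}) z
    exact (hsub (hmem _ (hsub.trans sdiff_subset) isPreconnected_connectedComponentIn
      (h ▸ mem_connectedComponentIn hz'w) (mem_connectedComponentIn hzw))).2 rfl
end

section
/- Let K ⊂ ℂ be compact, connected, and full, and let z ∈ ∂K. For every access to z there exists a curve γ : [0,1) → ℂ∖K landing at z that runs entirely through the domains V_r defining the access and visits all of them; moreover two such curves (for the same access), together with z, never separate K. -/
open Set Metric Filter Topology

/-- An access to a boundary point `z` of `K`: a choice, for every Euclidean disk of
radius `r` around `z`, of a connected component `V r` of `ball z r ∖ K`, nested so that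
`V r ⊆ V s` whenever `r < s`. -/
def IsAccess (K : Set ℂ) (z : ℂ) (V : ℝ → Set ℂ) : Prop :=
  (∀ r : ℝ, 0 < r → ∃ x ∈ Metric.ball z r \ K,
      V r = connectedComponentIn (Metric.ball z r \ K) x) ∧
  (∀ r s : ℝ, 0 < r → r < s → V r ⊆ V s)

/-- A curve `γ : [0,1) → ℂ ∖ K` landing at `z` which runs entirely through the domains
`V r` of an access and eventually enters each of them. -/
def IsCurveInAccess (K : Set ℂ) (z : ℂ) (V : ℝ → Set ℂ) (γ : ℝ → ℂ) : Prop :=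
  ContinuousOn γ (Set.Ico 0 1) ∧ (∀ t ∈ Set.Ico (0:ℝ) 1, γ t ∉ K) ∧
  Filter.Tendsto γ (nhdsWithin 1 (Set.Iio 1)) (nhds z) ∧
  (∀ t ∈ Set.Ico (0:ℝ) 1, ∃ r : ℝ, 0 < r ∧ γ t ∈ V r) ∧
  (∀ r : ℝ, 0 < r → ∃ t₀ ∈ Set.Ico (0:ℝ) 1, ∀ t, t₀ ≤ t → t < 1 → γ t ∈ V r)

/-- `f` has a continuous branch of logarithm on `S`. -/
def HasLogOn {X : Type*} [TopologicalSpace X] (f : X → ℂ) (S : Set X) : Prop :=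
  ∃ L : X → ℂ, ContinuousOn L S ∧ ∀ x ∈ S, Complex.exp (L x) = f x

section HasLogOn

variable {X : Type*} [TopologicalSpace X] {f g : X → ℂ} {S : Set X}

theorem HasLogOn.mul (hf : HasLogOn f S) (hg : HasLogOn g S) :
    HasLogOn (fun x => f x * g x) S := by
  obtain ⟨L, hL, hLf⟩ := hf
  obtain ⟨M, hM, hMg⟩ := hg
  exact ⟨fun x => L x + M x, hL.add hM, fun x hx => by rw [Complex.exp_add, hLf x hx, hMg x hx]⟩

theorem HasLogOn.inv (hf : HasLogOn f S) : HasLogOn (fun x => (f x)⁻¹) S := by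
  obtain ⟨L, hL, hLf⟩ := hf
  exact ⟨fun x => -L x, hL.neg, fun x hx => by rw [Complex.exp_neg, hLf x hx]⟩

theorem HasLogOn.congr (hf : HasLogOn f S) (h : EqOn f g S) : HasLogOn g S := by
  obtain ⟨L, hL, hLf⟩ := hf
  exact ⟨L, hL, fun x hx => (hLf x hx).trans (h hx)⟩

theorem HasLogOn.mono {T : Set X} (hf : HasLogOn f S) (h : T ⊆ S) : HasLogOn f T := by
  obtain ⟨L, hL, hLf⟩ := hf
  exact ⟨L, hL.mono h, fun x hx => hLf x (h hx)⟩

theorem HasLogOn.of_norm_sub_one_lt (hf : ContinuousOn f S) (h : ∀ x ∈ S, ‖f x - 1‖ < 1) :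
    HasLogOn f S := by
  have hs : ∀ x ∈ S, f x ∈ Complex.slitPlane := fun x hx => by
    have := Complex.mem_slitPlane_of_norm_lt_one (h x hx)
    simpa using this
  exact ⟨fun x => Complex.log (f x), hf.clog hs,
    fun x hx => Complex.exp_log (Complex.slitPlane_ne_zero (hs x hx))⟩

/-- Two branches of the logarithm differ by a constant on a preconnected set. -/
theorem IsPreconnected.sub_eq_sub_of_exp_eq (hS : IsPreconnected S) {L M : X → ℂ}
    (hL : ContinuousOn L S) (hM : ContinuousOn M S)
    (h : ∀ x ∈ S, Complex.exp (L x) = Complex.exp (M x)) {x y : X} (hx : x ∈ S) (hy : y ∈ S) :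
    L x - M x = L y - M y := by
  have hpi : (2 * Real.pi * Complex.I : ℂ) ≠ 0 := Complex.two_pi_I_ne_zero
  have hc : ContinuousOn (fun x => ((L x - M x) / (2 * Real.pi * Complex.I)).re) S :=
    Complex.continuous_re.comp_continuousOn ((hL.sub hM).div_const _)
  have hint : ∀ x ∈ S, ∃ n : ℤ, (L x - M x) / (2 * Real.pi * Complex.I) = n := fun x hx => by
    obtain ⟨n, hn⟩ := Complex.exp_eq_exp_iff_exists_int.1 (h x hx)
    exact ⟨n, by rw [hn]; field_simp; ring⟩
  have key := hS.constant_of_mapsTo (T := range ((↑) : ℤ → ℝ)) (by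
      rw [isDiscrete_iff_discreteTopology]
      exact Int.isClosedEmbedding_coe_real.isEmbedding.toHomeomorph.symm.isEmbedding
        |>.discreteTopology)
    hc (fun x hx => by obtain ⟨n, hn⟩ := hint x hx; exact ⟨n, by simp [hn]⟩) hx hy
  obtain ⟨n, hn⟩ := hint x hx
  obtain ⟨m, hm⟩ := hint y hy
  have hnm : (n : ℝ) = m := by simpa [hn, hm] using key
  have hnm' : (n : ℂ) = m := by exact_mod_cast hnm
  exact (div_left_inj' hpi).1 (by rw [hn, hm, hnm'])

/-- Branches of the logarithm glue along an increasing union of preconnected open sets with a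
common point. -/
theorem HasLogOn.iUnion_of_monotone {U : ℕ → Set X} (hU : Monotone U) (ho : ∀ n, IsOpen (U n))
    (hp : ∀ n, IsPreconnected (U n)) {x₀ : X} (h₀ : ∀ n, x₀ ∈ U n)
    (h : ∀ n, HasLogOn f (U n)) : HasLogOn f (⋃ n, U n) := by
  classical
  choose L hL hLf using h
  have hcons : ∀ m n, m ≤ n → ∀ x ∈ U m, L m x - L m x₀ = L n x - L n x₀ := by
    intro m n hmn x hx
    have := (hp m).sub_eq_sub_of_exp_eq (hL m) ((hL n).mono (hU hmn))
      (fun y hy => by rw [hLf m y hy, hLf n y (hU hmn hy)]) hx (h₀ m)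
    linear_combination this
  have hcons' : ∀ m n, ∀ x ∈ U m, x ∈ U n → L m x - L m x₀ = L n x - L n x₀ := by
    intro m n x hm hn
    rcases le_total m n with h | h
    · exact hcons m n h x hm
    · exact (hcons n m h x hn).symm
  have hex : ∀ x, ∃ n, x ∈ ⋃ n, U n → x ∈ U n := fun x => by
    by_cases hx : x ∈ ⋃ n, U n
    · obtain ⟨n, hn⟩ := mem_iUnion.1 hx
      exact ⟨n, fun _ => hn⟩
    · exact ⟨0, fun h => (hx h).elim⟩
  choose N hN using hex
  refine ⟨fun x => L (N x) x - L (N x) x₀ + L 0 x₀, fun x hx => ?_, fun x hx => ?_⟩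
  · have hxn := hN x hx
    have : ContinuousAt (fun y => L (N x) y - L (N x) x₀ + L 0 x₀) x :=
      (((hL _).continuousAt ((ho _).mem_nhds hxn)).sub continuousAt_const).add continuousAt_const
    refine (this.congr ?_).continuousWithinAt
    filter_upwards [(ho _).mem_nhds hxn] with y hy
    rw [hcons' _ _ y hy (hN y (mem_iUnion.2 ⟨_, hy⟩))]
  · rw [Complex.exp_add, Complex.exp_sub, hLf _ _ (hN x hx), hLf _ _ (h₀ _), hLf _ _ (h₀ 0)]
    have : f x₀ ≠ 0 := by rw [← hLf 0 _ (h₀ 0)]; exact Complex.exp_ne_zero _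
    field_simp

end HasLogOn

theorem hasLogOn_div_of_lt_infDist {K : Set ℂ} (hK : IsPreconnected K) {δ : ℝ} (hδ : 0 < δ)
    {a b : ℂ} (ha : a ∈ K) (hb : b ∈ K) :
    HasLogOn (fun w => (w - a) / (w - b)) {w | δ < infDist w K} := by
  have hlt : ∀ x ∈ K, ∀ w ∈ {w | δ < infDist w K}, δ < ‖w - x‖ := fun x hx w hw => by
    rw [← dist_eq_norm]
    exact lt_of_lt_of_le hw (infDist_le_dist_of_mem hx)
  have hne : ∀ x ∈ K, ∀ w ∈ {w | δ < infDist w K}, w - x ≠ 0 := fun x hx w hw =>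
    norm_pos_iff.1 (hδ.trans (hlt x hx w hw))
  have hnear : ∀ x ∈ K, ∀ y ∈ K, dist y x < δ →
      HasLogOn (fun w => (w - x) / (w - y)) {w | δ < infDist w K} := by
    intro x hx y hy hxy
    refine .of_norm_sub_one_lt
      (ContinuousOn.div (by fun_prop) (by fun_prop) (hne y hy)) fun w hw => ?_
    have : (w - x) / (w - y) - 1 = (y - x) / (w - y) := by
      have := hne y hy w hw
      field_simp
      ring
    rw [this, norm_div, div_lt_one (hδ.trans (hlt y hy w hw)), ← dist_eq_norm]
    exact hxy.trans (hlt y hy w hw)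
  refine hK.induction₂'
    (fun x y => HasLogOn (fun w => (w - x) / (w - y)) {w | δ < infDist w K}) ?_ ?_ ha hb
  · intro x hx
    filter_upwards [self_mem_nhdsWithin, mem_nhdsWithin_of_mem_nhds (ball_mem_nhds x hδ)]
      with y hy hyx
    exact ⟨hnear x hx y hy hyx, hnear y hy x hx (by rwa [dist_comm])⟩
  · intro x y t hx hy ht h1 h2
    refine (h1.mul h2).congr fun w hw => ?_
    have := hne y hy w hw
    have := hne t ht w hw
    field_simp

/-- If `a`, `b` lie in a closed preconnected set `K`, then `(w - a) / (w - b)` has a continuous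
logarithm on every component of the complement of `K`. -/
theorem hasLogOn_div_connectedComponentIn_compl {K : Set ℂ} (hKc : IsClosed K)
    (hK : IsPreconnected K) {a b : ℂ} (ha : a ∈ K) (hb : b ∈ K) {w₀ : ℂ} (hw₀ : w₀ ∉ K) :
    HasLogOn (fun w => (w - a) / (w - b)) (connectedComponentIn Kᶜ w₀) := by
  have hKne : K.Nonempty := ⟨a, ha⟩
  have hpos : ∀ w ∉ K, 0 < infDist w K := fun w hw =>
    (hKc.notMem_iff_infDist_pos hKne).1 hw
  set d := infDist w₀ K with hd
  have hd0 : 0 < d := hpos w₀ hw₀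
  let δ : ℕ → ℝ := fun n => d / (n + 2)
  have hδ : ∀ n, 0 < δ n := fun n => by positivity
  have hδd : ∀ n, δ n < d := fun n =>
    div_lt_self hd0 (by have : (0 : ℝ) ≤ n := n.cast_nonneg; linarith)
  let W : ℕ → Set ℂ := fun n => {w | δ n < infDist w K}
  have hWo : ∀ n, IsOpen (W n) := fun n => isOpen_lt continuous_const (continuous_infDist_pt K)
  have hWmono : Monotone W := fun m n hmn w hw => by
    have : (m : ℝ) ≤ n := by exact_mod_cast hmn
    exact (div_le_div_of_nonneg_left hd0.le (by positivity) (by linarith)).trans_lt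
      (show δ m < infDist w K from hw)
  have key : HasLogOn (fun w => (w - a) / (w - b)) (⋃ n, connectedComponentIn (W n) w₀) :=
    HasLogOn.iUnion_of_monotone (fun m n hmn => connectedComponentIn_mono _ (hWmono hmn))
      (fun n => (hWo n).connectedComponentIn) (fun n => isPreconnected_connectedComponentIn)
      (x₀ := w₀) (fun n => mem_connectedComponentIn (hδd n))
      (fun n => (hasLogOn_div_of_lt_infDist hK (hδ n) ha hb).mono (connectedComponentIn_subset _ _))
  refine key.mono fun w hw => ?_
  have hpc : IsPathConnected (connectedComponentIn Kᶜ w₀) :=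
    hKc.isOpen_compl.connectedComponentIn.isConnected_iff_isPathConnected.1
      ⟨⟨w₀, mem_connectedComponentIn hw₀⟩, isPreconnected_connectedComponentIn⟩
  obtain ⟨p, hp⟩ := hpc.joinedIn w₀ (mem_connectedComponentIn hw₀) w hw
  obtain ⟨t₀, ht₀⟩ :=
    ((continuous_infDist_pt K).comp p.continuous).exists_forall_le_of_hasCompactMulSupport
      (HasCompactMulSupport.of_compactSpace _)
  have hm : 0 < infDist (p t₀) K := hpos _ (connectedComponentIn_subset _ _ (hp t₀))
  obtain ⟨n, hn⟩ := exists_nat_gt (d / infDist (p t₀) K)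
  have hδn : δ n < infDist (p t₀) K := by
    rw [div_lt_iff₀ hm] at hn
    rw [div_lt_iff₀ (by positivity)]
    nlinarith
  refine mem_iUnion.2 ⟨n, ?_⟩
  exact (isPreconnected_range p.continuous).subset_connectedComponentIn ⟨0, p.source⟩
    (by rintro _ ⟨t, rfl⟩; exact hδn.trans_le (ht₀ t)) ⟨1, p.target⟩

/-- No nowhere vanishing continuous function on the plane agrees with `w - c` far away. -/
theorem exists_eq_zero_of_eq_sub_of_sphere {h : ℂ → ℂ} (hc : Continuous h) {c : ℂ} {R : ℝ}
    (hR : 0 < R) (hs : ∀ w ∈ sphere c R, h w = w - c) : ∃ w, h w = 0 := by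
  by_contra! hne
  obtain ⟨L, ⟨-, hLh⟩, -⟩ := Complex.isCoveringMapOn_exp.existsUnique_continuousMap_lifts
    (⟨h, hc⟩ : C(ℂ, ℂ)) (a₀ := 0) (Complex.exp_log (hne 0)) hne
  have hL : Continuous L := L.continuous
  have hcirc : ∀ θ : ℝ, h (circleMap c R θ) = circleMap 0 R θ := fun θ => by
    rw [hs _ (circleMap_mem_sphere c hR.le θ)]
    simp [circleMap]
  have := (isPreconnected_univ (α := ℝ)).sub_eq_sub_of_exp_eq
    (L := fun θ => L (circleMap c R θ)) (M := fun θ : ℝ => Real.log R + θ * Complex.I)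
    (hL.comp (continuous_circleMap c R)).continuousOn (by fun_prop) (fun θ _ => by
      have h1 : Complex.exp (L (circleMap c R θ)) = h (circleMap c R θ) := congr_fun hLh _
      rw [h1, hcirc, Complex.exp_add, ← Complex.ofReal_exp, Real.exp_log hR]
      simp [circleMap])
    (mem_univ 0) (mem_univ (2 * Real.pi))
  have hper : circleMap c R (2 * Real.pi) = circleMap c R 0 := by simp [circleMap]
  simp only [hper] at this
  have h2 : (2 * Real.pi * Complex.I : ℂ) = 0 := by
    push_cast at this
    linear_combination this
  exact Complex.two_pi_I_ne_zero h2

theorem frontier_connectedComponentIn_compl_subset_s8 {C : Set ℂ} (hC : IsClosed C) (a : ℂ) :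
    frontier (connectedComponentIn Cᶜ a) ⊆ C := by
  intro w hw
  by_contra hwC
  rw [hC.isOpen_compl.connectedComponentIn.frontier_eq] at hw
  obtain ⟨y, hy1, hy2⟩ := mem_closure_iff.1 hw.1 _ (hC.isOpen_compl.connectedComponentIn (x := w))
    (mem_connectedComponentIn hwC)
  apply hw.2
  rw [connectedComponentIn_eq hy2, ← connectedComponentIn_eq hy1]
  exact mem_connectedComponentIn hwC

theorem connectedComponentIn_compl_eq_of_isBounded {C : Set ℂ} (hC : IsCompact C) {a b : ℂ}
    (ha : a ∉ C) (hb : b ∉ C) (hL : HasLogOn (fun w => (w - a) / (w - b)) C)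
    (hbdd : Bornology.IsBounded (connectedComponentIn Cᶜ a)) :
    connectedComponentIn Cᶜ a = connectedComponentIn Cᶜ b := by
  classical
  by_contra hab
  set Ω := connectedComponentIn Cᶜ a with hΩ
  have haΩ : a ∈ Ω := mem_connectedComponentIn ha
  have hbΩ : b ∉ Ω := fun h => hab (connectedComponentIn_eq h)
  obtain ⟨L, hLc, hLf⟩ := hL
  obtain ⟨M, hM⟩ := ContinuousMap.exists_restrict_eq hC.isClosed
    ⟨C.domRestrict L, continuousOn_iff_continuous_domRestrict.mp hLc⟩
  have hML : ∀ w ∈ C, M w = L w := fun w hw => DFunLike.congr_fun hM ⟨w, hw⟩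
  obtain ⟨R, hR, hΩR⟩ := hbdd.subset_ball_lt 0 a
  let h : ℂ → ℂ := Ω.piecewise (fun w => Complex.exp (M w) * (w - b)) (fun w => w - a)
  have hcont : Continuous h := by
    refine Continuous.piecewise (fun w hw => ?_) (by fun_prop) (by fun_prop)
    have hwC := frontier_connectedComponentIn_compl_subset_s8 hC.isClosed a hw
    have : w - b ≠ 0 := sub_ne_zero.2 fun h => hb (h ▸ hwC)
    rw [hML w hwC, hLf w hwC]
    field_simp
  obtain ⟨w, hw⟩ := exists_eq_zero_of_eq_sub_of_sphere hcont hR (c := a) fun w hw => by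
    refine piecewise_eq_of_notMem _ _ _ fun hwΩ => ?_
    have := hΩR hwΩ
    rw [mem_ball] at this
    rw [mem_sphere] at hw
    exact this.ne hw
  by_cases hwΩ : w ∈ Ω
  · rw [show h w = _ from piecewise_eq_of_mem _ _ _ hwΩ] at hw
    rcases mul_eq_zero.1 hw with h0 | h0
    · exact Complex.exp_ne_zero _ h0
    · exact hbΩ (sub_eq_zero.1 h0 ▸ hwΩ)
  · rw [show h w = _ from piecewise_eq_of_notMem _ _ _ hwΩ] at hw
    exact hwΩ (sub_eq_zero.1 hw ▸ haΩ)

theorem isPreconnected_lt_norm {R : ℝ} (hR : 0 < R) : IsPreconnected {w : ℂ | R < ‖w‖} := by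
  have : {w : ℂ | R < ‖w‖} = Complex.exp '' {s : ℂ | Real.log R < s.re} := by
    ext w
    constructor
    · intro hw
      have hw0 : w ≠ 0 := norm_pos_iff.1 (hR.trans hw)
      exact ⟨Complex.log w, by
        simpa [Complex.log_re] using Real.log_lt_log hR hw, Complex.exp_log hw0⟩
    · rintro ⟨s, hs, rfl⟩
      rw [mem_ofPred_eq, Complex.norm_exp]
      exact (Real.log_lt_iff_lt_exp hR).1 hs
  rw [this]
  exact (convex_halfSpace_re_gt _).isPreconnected.image _ Complex.continuous_exp.continuousOn

/-- **Eilenberg's criterion**: two points `a`, `b` are not separated by a compact plane set on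
which `(w - a) / (w - b)` has a continuous logarithm. -/
theorem connectedComponentIn_compl_eq_of_hasLogOn {C : Set ℂ} (hC : IsCompact C) {a b : ℂ}
    (ha : a ∉ C) (hb : b ∉ C) (hL : HasLogOn (fun w => (w - a) / (w - b)) C) :
    connectedComponentIn Cᶜ a = connectedComponentIn Cᶜ b := by
  by_cases hba : Bornology.IsBounded (connectedComponentIn Cᶜ a)
  · exact connectedComponentIn_compl_eq_of_isBounded hC ha hb hL hba
  by_cases hbb : Bornology.IsBounded (connectedComponentIn Cᶜ b)
  · exact (connectedComponentIn_compl_eq_of_isBounded hC hb ha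
      (hL.inv.congr fun w _ => by simp) hbb).symm
  obtain ⟨R, hR, hCR⟩ := hC.isBounded.subset_closedBall_lt 0 0
  have hsub : {w : ℂ | R < ‖w‖} ⊆ Cᶜ := fun w hw hwC => by
    have := hCR hwC
    rw [mem_closedBall_zero_iff] at this
    exact absurd hw (not_lt.2 this)
  have hfar : ∀ c, ¬ Bornology.IsBounded (connectedComponentIn Cᶜ c) →
      ∃ w ∈ connectedComponentIn Cᶜ c, R < ‖w‖ := by
    intro c hc
    by_contra! h
    exact hc (isBounded_closedBall.subset fun w hw => mem_closedBall_zero_iff.2 (h w hw))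
  obtain ⟨x, hx, hxR⟩ := hfar a hba
  obtain ⟨y, hy, hyR⟩ := hfar b hbb
  have hxy : y ∈ connectedComponentIn Cᶜ x :=
    (isPreconnected_lt_norm hR).subset_connectedComponentIn hxR hsub hyR
  rw [connectedComponentIn_eq hx, connectedComponentIn_eq hxy, ← connectedComponentIn_eq hy]

/-- Concatenation of infinitely many paths. -/
theorem exists_continuous_of_joinedIn {x : ℕ → ℂ} {W : ℕ → Set ℂ}
    (h : ∀ n, JoinedIn (W n) (x n) (x (n + 1))) :
    ∃ g : ℝ → ℂ, Continuous g ∧ ∀ n : ℕ, ∀ t ∈ Icc (n : ℝ) (n + 1), g t ∈ W n := by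
  let e : ℕ → ℝ → ℂ := fun n t => (h n).somePath.extend (t - n)
  have hec : ∀ n, Continuous (e n) := fun n =>
    (h n).somePath.continuous_extend.comp (continuous_id.sub continuous_const)
  have he0 : ∀ (n : ℕ) (t : ℝ), t ≤ n → e n t = x n := fun n t ht =>
    Path.extend_of_le_zero _ (sub_nonpos.2 ht)
  have he1 : ∀ n : ℕ, ∀ t : ℝ, n + 1 ≤ t → e n t = x (n + 1) := fun n t ht =>
    Path.extend_of_one_le _ (by linarith)
  let S : ℕ → ℝ → ℂ := fun N t => x 0 + ∑ k ∈ Finset.range N, (e k t - x k)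
  have hSc : ∀ N, Continuous (S N) := fun N =>
    continuous_const.add (continuous_finsetSum _ fun k _ => (hec k).sub continuous_const)
  have hS : ∀ N M : ℕ, N ≤ M → ∀ t : ℝ, t ≤ N → S M t = S N t := by
    intro N M hNM t ht
    induction M, hNM using Nat.le_induction with
    | base => rfl
    | succ M hM ih =>
      have htM : t ≤ M := ht.trans (by exact_mod_cast hM)
      rw [← ih]
      simp only [S, Finset.sum_range_succ, he0 M t htM, sub_self, add_zero]
  have hg : ∀ N : ℕ, ∀ t : ℝ, t ≤ N → S ⌈t⌉₊ t = S N t := fun N t ht =>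
    (hS _ _ (Nat.ceil_le.2 ht) t (Nat.le_ceil t)).symm
  refine ⟨fun t => S ⌈t⌉₊ t, continuous_iff_continuousAt.2 fun t => ?_, fun n t ht => ?_⟩
  · obtain ⟨N, hN⟩ := exists_nat_gt t
    refine (hSc N).continuousAt.congr ?_
    filter_upwards [Iio_mem_nhds hN] with s hs
    exact (hg N s (le_of_lt hs)).symm
  · have hsum : ∀ m ≤ n, S m t = x m := by
      intro m hm
      induction m with
      | zero => simp [S]
      | succ m ih =>
        have hmt : (m : ℝ) + 1 ≤ t := le_trans (by exact_mod_cast hm) ht.1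
        have ih := ih (by omega)
        simp only [S, Finset.sum_range_succ, he1 m t hmt] at ih ⊢
        linear_combination ih
    have hval : S ⌈t⌉₊ t = e n t := by
      rw [hg (n + 1) t (by exact_mod_cast ht.2)]
      have := hsum n le_rfl
      simp only [S, Finset.sum_range_succ] at this ⊢
      linear_combination this
    have hmem : t - n ∈ Icc (0 : ℝ) 1 := ⟨by linarith [ht.1], by linarith [ht.2]⟩
    change S ⌈t⌉₊ t ∈ W n
    rw [hval]
    change (h n).somePath.extend (t - n) ∈ W n
    rw [Path.extend_apply _ hmem]
    exact (h n).somePath_mem _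

section Access

variable {K : Set ℂ} {z : ℂ} {V : ℝ → Set ℂ}

theorem IsAccess.subset (hV : IsAccess K z V) {r : ℝ} (hr : 0 < r) : V r ⊆ ball z r \ K := by
  obtain ⟨x, -, hx⟩ := hV.1 r hr
  exact hx ▸ connectedComponentIn_subset _ _

theorem IsAccess.isConnected (hV : IsAccess K z V) {r : ℝ} (hr : 0 < r) : IsConnected (V r) := by
  obtain ⟨x, hx, hVx⟩ := hV.1 r hr
  exact hVx ▸ isConnected_connectedComponentIn_iff.2 hx

theorem IsAccess.isOpen (hK : IsClosed K) (hV : IsAccess K z V) {r : ℝ} (hr : 0 < r) :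
    IsOpen (V r) := by
  obtain ⟨x, -, hx⟩ := hV.1 r hr
  exact hx ▸ (isOpen_ball.sdiff hK).connectedComponentIn

theorem IsAccess.exists_isCurveInAccess (hK : IsClosed K) (hV : IsAccess K z V) :
    ∃ γ : ℝ → ℂ, IsCurveInAccess K z V γ := by
  have hpos : ∀ n : ℕ, (0 : ℝ) < 1 / (n + 1) := fun n => by positivity
  choose x hx using fun n : ℕ => (hV.isConnected (hpos n)).nonempty
  have hJ : ∀ n : ℕ, JoinedIn (V (1 / (n + 1))) (x n) (x (n + 1)) := fun n => by
    refine ((hV.isOpen hK (hpos n)).isConnected_iff_isPathConnected.1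
      (hV.isConnected (hpos n))).joinedIn _ (hx n) _ ?_
    refine hV.2 _ _ (hpos (n + 1)) ?_ (hx (n + 1))
    push_cast
    exact one_div_lt_one_div_of_lt (by positivity) (by linarith)
  obtain ⟨g, hgc, hg⟩ := exists_continuous_of_joinedIn hJ
  have hmem : ∀ t ∈ Ico (0 : ℝ) 1, g (t / (1 - t)) ∈ V (1 / ((⌊t / (1 - t)⌋₊ : ℝ) + 1)) := by
    intro t ht
    have h0 : 0 ≤ t / (1 - t) := div_nonneg ht.1 (by linarith [ht.2])
    exact hg _ _ ⟨Nat.floor_le h0, (Nat.lt_floor_add_one _).le⟩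
  have hvisit : ∀ r : ℝ, 0 < r → ∃ t₀ ∈ Ico (0:ℝ) 1, ∀ t, t₀ ≤ t → t < 1 →
      g (t / (1 - t)) ∈ V r := by
    intro r hr
    obtain ⟨n, hn⟩ := exists_nat_one_div_lt hr
    refine ⟨n / (n + 1), ⟨by positivity, by rw [div_lt_one (by positivity)]; linarith⟩,
      fun t ht ht1 => ?_⟩
    have ht0 : 0 ≤ t := le_trans (by positivity) ht
    refine hV.2 _ _ (hpos _) (lt_of_le_of_lt ?_ hn) (hmem t ⟨ht0, ht1⟩)
    have hle : n ≤ ⌊t / (1 - t)⌋₊ := by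
      refine Nat.le_floor ?_
      rw [le_div_iff₀ (by linarith)]
      rw [div_le_iff₀ (by positivity)] at ht
      linarith
    have : (n : ℝ) ≤ ⌊t / (1 - t)⌋₊ := by exact_mod_cast hle
    exact one_div_le_one_div_of_le (by positivity) (by linarith)
  refine ⟨fun t => g (t / (1 - t)), ?_, fun t ht => (hV.subset (hpos _) (hmem t ht)).2, ?_,
    fun t ht => ⟨_, hpos _, hmem t ht⟩, hvisit⟩
  · exact hgc.comp_continuousOn (continuousOn_id.div (by fun_prop)
      fun t ht => by linarith [ht.2])
  · rw [Metric.tendsto_nhds]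
    intro r hr
    obtain ⟨t₀, ht₀, h⟩ := hvisit r hr
    filter_upwards [self_mem_nhdsWithin,
      mem_nhdsWithin_of_mem_nhds (Ici_mem_nhds ht₀.2)] with t ht1 ht
    exact (hV.subset hr (h t ht ht1)).1

variable {γ : ℝ → ℂ}

theorem IsCurveInAccess.isCompact (hγ : IsCurveInAccess K z V γ) :
    IsCompact (γ '' Ico 0 1 ∪ {z}) := by
  classical
  have hIcc : Icc (0 : ℝ) 1 = insert 1 (Ico 0 1) := (Ico_insert_right zero_le_one).symm
  have h1 : (1 : ℝ) ∉ Ico (0 : ℝ) 1 := fun h => lt_irrefl _ h.2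
  have himg : Function.update γ 1 z '' Icc 0 1 = γ '' Ico 0 1 ∪ {z} := by
    rw [hIcc, image_insert_eq, Function.update_self, union_singleton]
    congr 1
    exact image_congr fun t ht => Function.update_of_ne ht.2.ne _ _
  rw [← himg]
  refine isCompact_Icc.image_of_continuousOn ?_
  rw [continuousOn_update_iff]
  have hd : Icc (0 : ℝ) 1 \ {1} = Ico 0 1 := Icc_sdiff_right
  rw [hd]
  exact ⟨hγ.1, fun _ => hγ.2.2.1.mono_left (nhdsWithin_mono _ Ico_subset_Iio_self)⟩

theorem IsCurveInAccess.eventually_mem (hγ : IsCurveInAccess K z V γ) (hz : z ∈ K) {r : ℝ}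
    (hr : 0 < r) : ∀ᶠ w in 𝓝 z, w ∈ γ '' Ico 0 1 → w ∈ V r := by
  obtain ⟨t₀, ht₀, h⟩ := hγ.2.2.2.2 r hr
  have hsub : Icc 0 t₀ ⊆ Ico (0 : ℝ) 1 := Icc_subset_Ico_right ht₀.2
  have hc : IsClosed (γ '' Icc 0 t₀) :=
    (isCompact_Icc.image_of_continuousOn (hγ.1.mono hsub)).isClosed
  have hzc : z ∉ γ '' Icc 0 t₀ := by
    rintro ⟨t, ht, rfl⟩
    exact hγ.2.1 t (hsub ht) hz
  filter_upwards [hc.isOpen_compl.mem_nhds hzc] with w hw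
  rintro ⟨t, ht, rfl⟩
  refine h t (le_of_lt ?_) ht.2
  by_contra! hle
  exact hw ⟨t, ⟨ht.1, hle⟩, rfl⟩

theorem IsCurveInAccess.image_subset (hV : IsAccess K z V) (hγ : IsCurveInAccess K z V γ)
    {r : ℝ} (hr : 0 < r) {w₀ : ℂ} (hw₀ : w₀ ∈ V r) :
    γ '' Ico 0 1 ⊆ connectedComponentIn Kᶜ w₀ := by
  obtain ⟨t₀, ht₀, h⟩ := hγ.2.2.2.2 r hr
  have hmem : γ t₀ ∈ connectedComponentIn Kᶜ w₀ :=
    (hV.isConnected hr).isPreconnected.subset_connectedComponentIn hw₀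
      (fun w hw => (hV.subset hr hw).2) (h t₀ le_rfl ht₀.2)
  rw [connectedComponentIn_eq hmem]
  refine (isPreconnected_Ico.image γ hγ.1).subset_connectedComponentIn ⟨t₀, ht₀, rfl⟩ ?_
  rintro _ ⟨t, ht, rfl⟩
  exact hγ.2.1 t ht

theorem IsCurveInAccess.hasLogOn_union {γ₁ γ₂ : ℝ → ℂ} (hKc : IsClosed K)
    (hK : IsPreconnected K) (hz : z ∈ K) (hV : IsAccess K z V)
    (h₁ : IsCurveInAccess K z V γ₁) (h₂ : IsCurveInAccess K z V γ₂) {a b : ℂ}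
    (ha : a ∈ K \ {z}) (hb : b ∈ K \ {z}) :
    HasLogOn (fun w => (w - a) / (w - b)) (γ₁ '' Ico 0 1 ∪ γ₂ '' Ico 0 1 ∪ {z}) := by
  classical
  set f : ℂ → ℂ := fun w => (w - a) / (w - b) with hf
  have hza : z - a ≠ 0 := sub_ne_zero.2 fun h => ha.2 h.symm
  have hzb : z - b ≠ 0 := sub_ne_zero.2 fun h => hb.2 h.symm
  have hfz : f z ≠ 0 := div_ne_zero hza hzb
  have hfc : ∀ w, w - b ≠ 0 → ContinuousAt f w := fun w hw =>
    ContinuousAt.div (by fun_prop) (by fun_prop) hw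
  have hnear : ∀ᶠ w in 𝓝 z, w - b ≠ 0 ∧ ‖f w / f z - 1‖ < 1 := by
    have h1 : ∀ᶠ w in 𝓝 z, w - b ≠ 0 :=
      (continuousAt_id.sub continuousAt_const).eventually_ne hzb
    have h2 : ContinuousAt (fun w => ‖f w / f z - 1‖) z :=
      (((hfc z hzb).div_const _).sub continuousAt_const).norm
    exact h1.and (h2.eventually_lt_const (by simp [hfz]))
  obtain ⟨r, hr, hball⟩ := Metric.eventually_nhds_iff_ball.1 hnear
  obtain ⟨M, hMc, hM⟩ : HasLogOn f (ball z r) := by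
    have h1 : HasLogOn (fun w => f w / f z) (ball z r) :=
      .of_norm_sub_one_lt
        (fun w hw => ((hfc w (hball w hw).1).div_const _).continuousWithinAt)
        fun w hw => (hball w hw).2
    have h2 : HasLogOn (fun _ => f z) (ball z r) :=
      ⟨fun _ => Complex.log (f z), continuousOn_const, fun _ _ => Complex.exp_log hfz⟩
    exact (h1.mul h2).congr fun w _ => div_mul_cancel₀ _ hfz
  obtain ⟨w₀, hw₀⟩ := (hV.isConnected hr).nonempty
  have hw₀K : w₀ ∉ K := (hV.subset hr hw₀).2
  obtain ⟨L, hLc, hL⟩ := hasLogOn_div_connectedComponentIn_compl hKc hK ha.1 hb.1 hw₀K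
  set Ω := connectedComponentIn Kᶜ w₀
  have hΩo : IsOpen Ω := hKc.isOpen_compl.connectedComponentIn
  have hVΩ : V r ⊆ Ω := (hV.isConnected hr).isPreconnected.subset_connectedComponentIn hw₀
    fun w hw => (hV.subset hr hw).2
  have hVb : V r ⊆ ball z r := fun w hw => (hV.subset hr hw).1
  set c := L w₀ - M w₀ with hc
  have hLM : ∀ w ∈ V r, L w = M w + c := fun w hw => by
    have := (hV.isConnected hr).isPreconnected.sub_eq_sub_of_exp_eq (hLc.mono hVΩ)
      (hMc.mono hVb) (fun y hy => by rw [hL y (hVΩ hy), hM y (hVb hy)]) hw hw₀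
    linear_combination this
  have hexpc : Complex.exp c = 1 := by
    rw [hc, Complex.exp_sub, (hL w₀ (hVΩ hw₀)).trans (hM w₀ (hVb hw₀)).symm,
      div_self (Complex.exp_ne_zero _)]
  have hCΩ : ∀ w ∈ γ₁ '' Ico 0 1 ∪ γ₂ '' Ico 0 1, w ∈ Ω := fun w hw =>
    hw.elim (fun h => h₁.image_subset hV hr hw₀ h) (fun h => h₂.image_subset hV hr hw₀ h)
  have hzM : Function.update L z (M z + c) z = M z + c := Function.update_self _ _ _
  refine ⟨Function.update L z (M z + c), fun w hw => ?_, fun w hw => ?_⟩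
  · by_cases hwz : w = z
    · subst hwz
      have hMw : ContinuousAt (fun w => M w + c) w :=
        (hMc.continuousAt (ball_mem_nhds w hr)).add continuousAt_const
      refine hMw.continuousWithinAt.congr_of_eventuallyEq ?_ hzM
      filter_upwards [self_mem_nhdsWithin,
        mem_nhdsWithin_of_mem_nhds (h₁.eventually_mem hz hr),
        mem_nhdsWithin_of_mem_nhds (h₂.eventually_mem hz hr)] with y hy hy₁ hy₂
      by_cases hyw : y = w
      · rw [hyw, hzM]
      · rw [Function.update_of_ne hyw]
        rcases hy with (hy | hy) | hy
        · exact hLM y (hy₁ hy)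
        · exact hLM y (hy₂ hy)
        · exact (hyw hy).elim
    · have hwΩ : w ∈ Ω := hCΩ w (hw.resolve_right hwz)
      exact ((continuousAt_update_of_ne hwz).2
        (hLc.continuousAt (hΩo.mem_nhds hwΩ))).continuousWithinAt
  · by_cases hwz : w = z
    · rw [hwz, hzM, Complex.exp_add, hexpc, mul_one, hM z (mem_ball_self hr)]
    · rw [Function.update_of_ne hwz, hL w (hCΩ w (hw.resolve_right hwz))]

end Access

/-- For every access to a boundary point `z` of a compact, connected, full set `K ⊂ ℂ`
there is a curve in `ℂ ∖ K` landing at `z`, running entirely through the domains of the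
access and visiting all of them; moreover two such curves, together with `z`, never
separate `K`: any two points of `K ∖ {z}` lie in the same connected component of the
complement of the union of the two curves and `{z}`. -/
theorem access_curve_exists_and_no_separation (K : Set ℂ)
    (hK : IsCompact K) (hconn : IsConnected K)
    (hfull : ∀ w ∉ K, ¬ Bornology.IsBounded (connectedComponentIn Kᶜ w))
    (z : ℂ) (hz : z ∈ frontier K)
    (V : ℝ → Set ℂ) (hV : IsAccess K z V) :
    (∃ γ : ℝ → ℂ, IsCurveInAccess K z V γ) ∧
    ∀ γ₁ γ₂ : ℝ → ℂ, IsCurveInAccess K z V γ₁ → IsCurveInAccess K z V γ₂ →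
      ∀ a ∈ K \ {z}, ∀ b ∈ K \ {z},
        connectedComponentIn (γ₁ '' Set.Ico 0 1 ∪ γ₂ '' Set.Ico 0 1 ∪ {z})ᶜ a =
          connectedComponentIn (γ₁ '' Set.Ico 0 1 ∪ γ₂ '' Set.Ico 0 1 ∪ {z})ᶜ b := by
  have hzK : z ∈ K := hK.isClosed.frontier_subset hz
  refine ⟨hV.exists_isCurveInAccess hK.isClosed, fun γ₁ γ₂ h₁ h₂ a ha b hb => ?_⟩
  have hC : IsCompact (γ₁ '' Set.Ico 0 1 ∪ γ₂ '' Set.Ico 0 1 ∪ {z}) := by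
    have := h₁.isCompact.union h₂.isCompact
    rwa [← union_union_distrib_right] at this
  have hnot : ∀ x ∈ K \ {z}, x ∉ γ₁ '' Set.Ico 0 1 ∪ γ₂ '' Set.Ico 0 1 ∪ {z} := by
    rintro x hx ((⟨t, ht, rfl⟩ | ⟨t, ht, rfl⟩) | h)
    · exact h₁.2.1 t ht hx.1
    · exact h₂.2.1 t ht hx.1
    · exact hx.2 h
  exact connectedComponentIn_compl_eq_of_hasLogOn hC (hnot a ha) (hnot b hb)
    (h₁.hasLogOn_union hK.isClosed hconn.isPreconnected hzK hV h₂ ha hb)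
end
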